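/- Forward uniqueness for mKdV in E: let 0 < t₁ < t₂ and let u and v be two solutions of mKdV with u, v ∈ E([t₁, t₂]). If u(t₁) = v(t₁), then u(t) = v(t) for all t ∈ [t₁, t₂]. -/

import Mathlib

open MeasureTheory Set Filter Topology

noncomputable section

namespace MKdVPaper

/-- The Japanese bracket `⟨y⟩ = √(1+y²)`. -/
def jap (y : ℝ) : ℝ := Real.sqrt (1 + y ^ 2)

/-- Truncated Fourier-type integral recovering the physical function from a profile `w`:
`(1/π) Re ∫_0^R e^{i(px + p³ t)} w(p) dp`. -/
def physPartial (w : ℝ → ℂ) (t x R : ℝ) : ℝ :=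
  (1 / Real.pi) *
    (∫ p in Ioc (0 : ℝ) R, Complex.exp (Complex.I * ((p * x + p ^ 3 * t : ℝ) : ℂ)) * w p).re

/-- `u` is the physical-space function associated with the profile `w` at time `t`, i.e.
`u(x) = (1/π) Re ∫_0^∞ e^{i(px + p³t)} w(p) dp` as an improper integral. -/
def IsPhys (w : ℝ → ℂ) (t : ℝ) (u : ℝ → ℝ) : Prop :=
  ∀ x : ℝ, Tendsto (fun R => physPartial w t x R) atTop (𝓝 (u x))

/-- Sup norm of a profile. -/
def supN (w : ℝ → ℂ) : ℝ := ⨆ p : ℝ, ‖w p‖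

/-- `L²((0,∞))` norm of the derivative of the profile. -/
def dL2 (w : ℝ → ℂ) : ℝ := (eLpNorm (deriv w) 2 (volume.restrict (Ioi 0))).toReal

/-- The `E(t)` norm: `‖ũ‖_{L^∞} + t^{-1/6} ‖∂_p ũ‖_{L²((0,∞))}`. -/
def EnormP (t : ℝ) (w : ℝ → ℂ) : ℝ := supN w + t ^ (-(1 / 6 : ℝ)) * dL2 w

/-- Membership conditions for `E(t)` on the profile side: profile of a real-valued
distribution, bounded and continuous on `(0,∞)`, with derivative in `L²((0,∞))`. -/
structure MemE (w : ℝ → ℂ) : Prop where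
  symm : ∀ p : ℝ, w (-p) = starRingEnd ℂ (w p)
  cont : ContinuousOn w (Ioi 0)
  bdd : BddAbove (range fun p : ℝ => ‖w p‖)
  diff : ∀ p ∈ Ioi (0 : ℝ), DifferentiableAt ℝ w p
  derivL2 : MemLp (deriv w) 2 (volume.restrict (Ioi 0))

/-- A space-time function of class `E(I)`: a physical function `u` together with its
profile `w(t,p) = e^{-itp³} û(t,p)`. -/
structure ESol (I : Set ℝ) where
  u : ℝ → ℝ → ℝ
  w : ℝ → ℝ → ℂ
  memE : ∀ t ∈ I, MemE (w t)
  isPhys : ∀ t ∈ I, IsPhys (w t) t (u t)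
  contt : ContinuousOn (fun q : ℝ × ℝ => w q.1 q.2) (I ×ˢ Ioi 0)

/-- Finiteness of the `E(I)` norm: `sup_{t ∈ I} ‖u(t)‖_{E(t)} < ∞`. -/
def FiniteEnorm (I : Set ℝ) (sol : ESol I) : Prop :=
  BddAbove ((fun t => EnormP t (sol.w t)) '' I)

/-- Time derivative of a test function. -/
def dt1 (φ : ℝ → ℝ → ℝ) : ℝ → ℝ → ℝ := fun t x => deriv (fun s => φ s x) t

/-- Space derivative of a test function. -/
def dx1 (φ : ℝ → ℝ → ℝ) : ℝ → ℝ → ℝ := fun t x => deriv (fun y => φ t y) x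

/-- `u` is a distributional solution of `∂ₜ u + ∂ₓ³ u + ε ∂ₓ(u³) = 0` on `I × ℝ`. -/
def IsSolOn (ε : ℝ) (u : ℝ → ℝ → ℝ) (I : Set ℝ) : Prop :=
  ∀ φ : ℝ → ℝ → ℝ,
    ContDiff ℝ (⊤ : ℕ∞) (fun q : ℝ × ℝ => φ q.1 q.2) →
    HasCompactSupport (fun q : ℝ × ℝ => φ q.1 q.2) →
    tsupport (fun q : ℝ × ℝ => φ q.1 q.2) ⊆ interior I ×ˢ univ →
    (∫ q : ℝ × ℝ,
      (u q.1 q.2 * (dt1 φ q.1 q.2 + dx1 (dx1 (dx1 φ)) q.1 q.2)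
        + ε * u q.1 q.2 ^ 3 * dx1 φ q.1 q.2)) = 0

/-- Self-similar solution: `S(t,x) = t^{-1/3} V(t^{-1/3} x)`. -/
def SelfSimilar {I : Set ℝ} (S : ESol I) : Prop :=
  ∃ V : ℝ → ℝ, ∀ t ∈ I, ∀ x : ℝ,
    S.u t x = t ^ (-(1 / 3 : ℝ)) * V (t ^ (-(1 / 3 : ℝ)) * x)

/-- The Fourier transform at time 1 recovered from the profile: `û(1,p) = e^{ip³} ũ(1,p)`. -/
def hatAtOne (w : ℝ → ℂ) : ℝ → ℂ := fun p => Complex.exp (Complex.I * ((p ^ 3 : ℝ) : ℂ)) * w p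

/-- The Fourier transforms at time 1 have the same limit at frequency `0⁺`. -/
def SameZeroLimit (w₁ w₂ : ℝ → ℂ) : Prop :=
  ∃ c : ℂ, Tendsto (hatAtOne w₁) (𝓝[>] (0 : ℝ)) (𝓝 c) ∧
    Tendsto (hatAtOne w₂) (𝓝[>] (0 : ℝ)) (𝓝 c)

/-- Truncated Airy–Fock integral. -/
def AiP (z R : ℝ) : ℂ :=
  ((1 / Real.pi : ℝ) : ℂ) *
    ∫ p in Ioc (0 : ℝ) R, Complex.exp (Complex.I * ((p * z + p ^ 3 : ℝ) : ℂ))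

/-- The Airy–Fock function `Ai(z) = (1/π)∫_0^∞ e^{i(pz+p³)} dp` (improper integral). -/
def AiFock (z : ℝ) : ℂ := limUnder atTop fun R => AiP z R

end MKdVPaper
open scoped ContDiff

namespace MKdVPaper

lemma integral_inv_sq_add_sq_le {A p₀ a b : ℝ} (hA : 0 < A) :
    ∫ p in a..b, 1 / (A ^ 2 + (p - p₀) ^ 2) ≤ Real.pi / A := by
  have hder : ∀ p ∈ uIcc a b, HasDerivAt (fun p => Real.arctan ((p - p₀) / A) / A)
      (1 / (A ^ 2 + (p - p₀) ^ 2)) p := by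
    intro p _
    have h := ((((hasDerivAt_id p).sub_const p₀).div_const A).arctan).div_const A
    refine h.congr_deriv ?_
    have : A ^ 2 + (p - p₀) ^ 2 ≠ 0 := by positivity
    simp only [id]
    field_simp
  rw [intervalIntegral.integral_eq_sub_of_hasDerivAt hder]
  · rw [← sub_div]
    gcongr
    linarith [Real.arctan_lt_pi_div_two ((b - p₀) / A), Real.neg_pi_div_two_lt_arctan ((a - p₀) / A)]
  · apply Continuous.intervalIntegrable
    apply Continuous.div continuous_const (by fun_prop)
    intro p; positivity

/-- The phase factor `e^{i(px+p³t)}`. -/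
def phase (t x p : ℝ) : ℂ := Complex.exp (Complex.I * ((p * x + p ^ 3 * t : ℝ) : ℂ))

lemma norm_phase (t x p : ℝ) : ‖phase t x p‖ = 1 := by
  rw [phase, mul_comm, Complex.norm_exp_ofReal_mul_I]

lemma continuous_phase : Continuous fun q : ℝ × ℝ × ℝ => phase q.1 q.2.1 q.2.2 := by
  unfold phase; fun_prop

lemma hasDerivAt_phase (t x p : ℝ) :
    HasDerivAt (phase t x) (phase t x p * (Complex.I * ((x + 3 * t * p ^ 2 : ℝ) : ℂ))) p := by
  have h1 : HasDerivAt (fun p : ℝ => p * x + p ^ 3 * t) (x + 3 * t * p ^ 2) p := by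
    have := ((hasDerivAt_id p).mul_const x).add (((hasDerivAt_id p).pow 3).mul_const t)
    refine this.congr_deriv ?_
    simp; ring
  exact (h1.ofReal_comp.const_mul Complex.I).cexp

/-- A profile bounded by `M`, differentiable on the half-line, with `∫ |∂ₚw|² ≤ D`. -/
structure ProfileBound (w : ℝ → ℂ) (M D : ℝ) : Prop where
  diff : ∀ p ∈ Ioi (0 : ℝ), DifferentiableAt ℝ w p
  bound : ∀ p, ‖w p‖ ≤ M
  meas : AEStronglyMeasurable (deriv w) (volume.restrict (Ioi 0))
  sqInt : IntegrableOn (fun p => ‖deriv w p‖ ^ 2) (Ioi 0)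
  sqLe : ∫ p in Ioi (0 : ℝ), ‖deriv w p‖ ^ 2 ≤ D

lemma ProfileBound.continuousOn {w : ℝ → ℂ} {M D : ℝ} (hw : ProfileBound w M D) :
    ContinuousOn w (Ioi 0) :=
  fun p hp => (hw.diff p hp).continuousAt.continuousWithinAt

lemma ProfileBound.nonneg {w : ℝ → ℂ} {M D : ℝ} (hw : ProfileBound w M D) : 0 ≤ M :=
  (norm_nonneg _).trans (hw.bound 0)

lemma ProfileBound.integrableOn {w : ℝ → ℂ} {M D : ℝ} (hw : ProfileBound w M D) (t x R : ℝ) :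
    IntegrableOn (fun p => phase t x p * w p) (Ioc 0 R) := by
  refine Integrable.mono' (g := fun _ => M) (integrableOn_const (by simp)) ?_ ?_
  · refine ContinuousOn.aestronglyMeasurable ?_ measurableSet_Ioc
    refine ContinuousOn.mul ?_ (hw.continuousOn.mono fun p hp => hp.1)
    exact (continuous_phase.comp (f := fun p : ℝ => (t, x, p)) (by fun_prop)).continuousOn
  · refine ae_of_all _ fun p => ?_
    rw [norm_mul, norm_phase, one_mul]
    exact hw.bound p

lemma ProfileBound.deriv_integrableOn {w : ℝ → ℂ} {M D : ℝ} (hw : ProfileBound w M D)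
    {a b : ℝ} (ha : 0 < a) : IntegrableOn (deriv w) (Ioc a b) := by
  have hsub : Ioc a b ⊆ Ioi 0 := fun p hp => ha.trans hp.1
  have hg : IntegrableOn (fun p => 1 + ‖deriv w p‖ ^ 2) (Ioc a b) :=
    (integrableOn_const (by simp)).add (hw.sqInt.mono_set hsub)
  refine hg.mono' (hw.meas.mono_measure (Measure.restrict_mono hsub le_rfl)) ?_
  refine ae_of_all _ fun p => ?_
  nlinarith [sq_nonneg (‖deriv w p‖ - 1), norm_nonneg (deriv w p)]

lemma ProfileBound.norm_integral_le_of_pos {w : ℝ → ℂ} {M D : ℝ} (hw : ProfileBound w M D)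
    {t x a b p₀ A L : ℝ} (ht : 0 ≤ t) (ha : 0 < a) (hab : a ≤ b) (hA : 0 < A) (hL : 0 < L)
    (hq : ∀ p ∈ Icc a b, L * (A ^ 2 + (p - p₀) ^ 2) ≤ (x + 3 * t * p ^ 2) ^ 2) :
    ‖∫ p in a..b, phase t x p * w p‖ ≤
      4 * M / (A * √L) + (D + Real.pi) / (2 * √(L * A)) := by
  set q : ℝ → ℝ := fun p => x + 3 * t * p ^ 2 with hqdef
  have hM := hw.nonneg
  have hAL : 0 < A * √L := by positivity
  have hqabs : ∀ p ∈ Icc a b, A * √L ≤ |q p| := by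
    intro p hp
    apply le_of_sq_le_sq _ (abs_nonneg _)
    rw [sq_abs, mul_pow, Real.sq_sqrt hL.le]
    nlinarith [hq p hp, mul_nonneg hL.le (sq_nonneg (p - p₀))]
  have hq0 : ∀ p ∈ Icc a b, q p ≠ 0 := fun p hp h => by
    have := hqabs p hp
    rw [h, abs_zero] at this
    linarith
  have hu : uIcc a b = Icc a b := uIcc_of_le hab
  have hqinv : ∀ p ∈ Icc a b, |(q p)⁻¹| ≤ 1 / (A * √L) := by
    intro p hp
    rw [abs_inv, ← one_div]
    exact one_div_le_one_div_of_le hAL (hqabs p hp)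
  have hqc : Continuous q := by fun_prop
  have hqder : ∀ p, HasDerivAt q (6 * t * p) p := by
    intro p
    have := (((hasDerivAt_id p).pow 2).const_mul (3 * t)).const_add x
    refine this.congr_deriv ?_
    simp; ring
  have hinvder : ∀ p ∈ Icc a b, HasDerivAt (fun p => (q p)⁻¹) (-(6 * t * p) / (q p) ^ 2) p :=
    fun p hp => (hqder p).inv (hq0 p hp)
  have hinvcont : ContinuousOn (fun p => (q p)⁻¹) (Icc a b) :=
    hqc.continuousOn.inv₀ hq0
  have hphc : Continuous (phase t x) :=
    continuous_phase.comp (f := fun p : ℝ => (t, x, p)) (by fun_prop)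
  have hwc : ContinuousOn w (Icc a b) := hw.continuousOn.mono fun p hp => ha.trans_le hp.1
  set e : ℝ → ℂ := fun p => -Complex.I * phase t x p with hedef
  have hec : Continuous e := by fun_prop
  have henorm : ∀ p, ‖e p‖ = 1 := fun p => by simp [hedef, norm_phase]
  -- the primitive and the two remainder terms
  set r₁ : ℝ → ℂ := fun p => e p * ((q p)⁻¹ : ℝ) * deriv w p with hr₁
  set r₂ : ℝ → ℂ := fun p => e p * ((-(6 * t * p) / (q p) ^ 2 : ℝ) : ℂ) * w p with hr₂
  have hfd : ∀ p ∈ uIcc a b, HasDerivAt (fun p => e p * ((q p)⁻¹ : ℝ) * w p)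
      (phase t x p * w p + r₂ p + r₁ p) p := by
    intro p hp
    rw [hu] at hp
    have h1 := (hasDerivAt_phase t x p).const_mul (-Complex.I)
    have h2 := (hinvder p hp).ofReal_comp
    have h3 := (hw.diff p (ha.trans_le hp.1)).hasDerivAt
    refine ((h1.mul h2).mul h3).congr_deriv ?_
    have hqp : ((q p : ℝ) : ℂ) ≠ 0 := by exact_mod_cast hq0 p hp
    have hqi : ((x + 3 * t * p ^ 2 : ℝ) : ℂ) * (((q p)⁻¹ : ℝ) : ℂ) = 1 := by
      rw [Complex.ofReal_inv]; exact mul_inv_cancel₀ hqp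
    have hI := Complex.I_mul_I
    simp only [hr₁, hr₂, hedef, Pi.mul_apply]
    linear_combination (phase t x p * w p) * hqi -
      (phase t x p * w p * ((x + 3 * t * p ^ 2 : ℝ) : ℂ) * (((q p)⁻¹ : ℝ) : ℂ)) * hI
  have hi0 : IntervalIntegrable (fun p => phase t x p * w p) volume a b := by
    apply ContinuousOn.intervalIntegrable
    rw [hu]; exact hphc.continuousOn.mul hwc
  have hdq : ContinuousOn (fun p => (-(6 * t * p) / (q p) ^ 2)) (Icc a b) :=
    ContinuousOn.div (by fun_prop) (by fun_prop) fun p hp => pow_ne_zero _ (hq0 p hp)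
  have hi2 : IntervalIntegrable r₂ volume a b := by
    apply ContinuousOn.intervalIntegrable
    rw [hu]
    exact (hec.continuousOn.mul (Complex.continuous_ofReal.comp_continuousOn hdq)).mul hwc
  have hi1 : IntervalIntegrable r₁ volume a b := by
    have : IntervalIntegrable (deriv w) volume a b :=
      (intervalIntegrable_iff_integrableOn_Ioc_of_le hab).2 (hw.deriv_integrableOn ha)
    apply this.continuousOn_mul
    rw [hu]
    exact hec.continuousOn.mul (Complex.continuous_ofReal.comp_continuousOn hinvcont)
  have hftc := intervalIntegral.integral_eq_sub_of_hasDerivAt hfd ((hi0.add hi2).add hi1)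
  rw [intervalIntegral.integral_add (hi0.add hi2) hi1, intervalIntegral.integral_add hi0 hi2]
    at hftc
  have hbd : ∀ p ∈ Icc a b, ‖e p * ((q p)⁻¹ : ℝ) * w p‖ ≤ M / (A * √L) := by
    intro p hp
    rw [norm_mul, norm_mul, henorm, one_mul, Complex.norm_real, Real.norm_eq_abs]
    calc _ ≤ 1 / (A * √L) * M := mul_le_mul (hqinv p hp) (hw.bound p) (norm_nonneg _) (by positivity)
      _ = _ := by ring
  have hb2 : ‖∫ p in a..b, r₂ p‖ ≤ 2 * M / (A * √L) := by
    have hle : ‖∫ p in a..b, r₂ p‖ ≤ ∫ p in a..b, M * -(-(6 * t * p) / (q p) ^ 2) := by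
      apply intervalIntegral.norm_integral_le_of_norm_le hab
      · refine ae_of_all _ fun p hp => ?_
        have hp0 : 0 ≤ p := (ha.trans hp.1).le
        simp only [hr₂]
        rw [norm_mul, norm_mul, henorm, one_mul, Complex.norm_real, Real.norm_eq_abs, mul_comm]
        rw [abs_of_nonpos (div_nonpos_of_nonpos_of_nonneg (by simp; positivity) (sq_nonneg _))]
        exact mul_le_mul_of_nonneg_right (hw.bound p)
          (by rw [neg_div, neg_neg]; positivity)
      · apply ContinuousOn.intervalIntegrable
        rw [hu]; exact continuousOn_const.mul hdq.neg
    rw [intervalIntegral.integral_const_mul, intervalIntegral.integral_neg,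
      intervalIntegral.integral_eq_sub_of_hasDerivAt (fun p hp => hinvder p (hu ▸ hp))
        (ContinuousOn.intervalIntegrable (hu ▸ hdq))] at hle
    have h1 := (abs_le.1 (hqinv a ⟨le_rfl, hab⟩)).2
    have h2 := (abs_le.1 (hqinv b ⟨hab, le_rfl⟩)).1
    calc _ ≤ _ := hle
      _ ≤ M * (1 / (A * √L) + 1 / (A * √L)) := by gcongr; linarith
      _ = _ := by ring
  have hb1 : ‖∫ p in a..b, r₁ p‖ ≤ (D + Real.pi) / (2 * √(L * A)) := by
    have hs : 0 < √(L * A) := by positivity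
    have hss : √(L * A) * √(L * A) = L * A := Real.mul_self_sqrt (by positivity)
    have hc1 : IntervalIntegrable (fun p => ‖deriv w p‖ ^ 2) volume a b :=
      (intervalIntegrable_iff_integrableOn_Ioc_of_le hab).2
        (hw.sqInt.mono_set fun p hp => ha.trans hp.1)
    have hc2 : IntervalIntegrable (fun p => 1 / (A ^ 2 + (p - p₀) ^ 2)) volume a b := by
      apply Continuous.intervalIntegrable
      exact Continuous.div continuous_const (by fun_prop) fun p => by positivity
    have hle : ‖∫ p in a..b, r₁ p‖ ≤ ∫ p in a..b, (1 / (2 * √(L * A)) * ‖deriv w p‖ ^ 2 +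
        √(L * A) / (2 * L) * (1 / (A ^ 2 + (p - p₀) ^ 2))) := by
      apply intervalIntegral.norm_integral_le_of_norm_le hab
      · refine ae_of_all _ fun p hp => ?_
        have hp' : p ∈ Icc a b := ⟨hp.1.le, hp.2⟩
        simp only [hr₁]
        rw [norm_mul, norm_mul, henorm, one_mul, Complex.norm_real, Real.norm_eq_abs]
        have h1 : |(q p)⁻¹| ^ 2 ≤ 1 / (L * (A ^ 2 + (p - p₀) ^ 2)) := by
          rw [sq_abs, inv_pow, ← one_div]
          exact one_div_le_one_div_of_le (by positivity) (hq p hp')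
        have h2 : |(q p)⁻¹| * ‖deriv w p‖ ≤
            1 / (2 * √(L * A)) * ‖deriv w p‖ ^ 2 + √(L * A) / 2 * |(q p)⁻¹| ^ 2 := by
          have := sq_nonneg (‖deriv w p‖ - √(L * A) * |(q p)⁻¹|)
          rw [← sub_nonneg]
          have e1 : 1 / (2 * √(L * A)) * ‖deriv w p‖ ^ 2 + √(L * A) / 2 * |(q p)⁻¹| ^ 2
              - |(q p)⁻¹| * ‖deriv w p‖ =
              1 / (2 * √(L * A)) * (‖deriv w p‖ - √(L * A) * |(q p)⁻¹|) ^ 2 := by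
            field_simp; ring
          rw [e1]; positivity
        calc _ ≤ _ := h2
          _ ≤ 1 / (2 * √(L * A)) * ‖deriv w p‖ ^ 2 +
              √(L * A) / 2 * (1 / (L * (A ^ 2 + (p - p₀) ^ 2))) := by gcongr
          _ = _ := by
            have : A ^ 2 + (p - p₀) ^ 2 ≠ 0 := by positivity
            field_simp
      · exact (hc1.const_mul _).add (hc2.const_mul _)
    rw [intervalIntegral.integral_add (hc1.const_mul _) (hc2.const_mul _),
      intervalIntegral.integral_const_mul, intervalIntegral.integral_const_mul] at hle
    have hD : ∫ p in a..b, ‖deriv w p‖ ^ 2 ≤ D := by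
      rw [intervalIntegral.integral_of_le hab]
      refine le_trans ?_ hw.sqLe
      exact setIntegral_mono_set hw.sqInt (ae_of_all _ fun p => by positivity)
        (LE.le.eventuallyLE fun p hp => ha.trans hp.1)
    have hpi := integral_inv_sq_add_sq_le (p₀ := p₀) (a := a) (b := b) hA
    calc _ ≤ _ := hle
      _ ≤ 1 / (2 * √(L * A)) * D + √(L * A) / (2 * L) * (Real.pi / A) := by gcongr
      _ = _ := by
        field_simp
        rw [sq, hss]; field_simp
  have heq : ∫ p in a..b, phase t x p * w p = e b * ((q b)⁻¹ : ℝ) * w b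
      - e a * ((q a)⁻¹ : ℝ) * w a - (∫ p in a..b, r₂ p) - ∫ p in a..b, r₁ p := by
    linear_combination hftc
  rw [heq]
  calc _ ≤ M / (A * √L) + M / (A * √L) + 2 * M / (A * √L)
        + (D + Real.pi) / (2 * √(L * A)) := by
        refine (norm_sub_le _ _).trans (add_le_add ?_ hb1)
        refine (norm_sub_le _ _).trans (add_le_add ?_ hb2)
        exact (norm_sub_le _ _).trans
          (add_le_add (hbd b ⟨hab, le_rfl⟩) (hbd a ⟨le_rfl, hab⟩))
    _ = _ := by ring

lemma ProfileBound.norm_integral_le_mul {w : ℝ → ℂ} {M D : ℝ} (hw : ProfileBound w M D)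
    {t x a b : ℝ} (hab : a ≤ b) :
    ‖∫ p in a..b, phase t x p * w p‖ ≤ M * (b - a) := by
  have := intervalIntegral.norm_integral_le_of_norm_le_const (a := a) (b := b)
    (f := fun p => phase t x p * w p) (C := M) fun p _ => by
      rw [norm_mul, norm_phase, one_mul]; exact hw.bound p
  rwa [abs_of_nonneg (sub_nonneg.2 hab)] at this

lemma ProfileBound.intervalIntegrable {w : ℝ → ℂ} {M D : ℝ} (hw : ProfileBound w M D)
    {t x a b : ℝ} (ha : 0 ≤ a) (hab : a ≤ b) :
    IntervalIntegrable (fun p => phase t x p * w p) volume a b :=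
  (intervalIntegrable_iff_integrableOn_Ioc_of_le hab).2
    ((hw.integrableOn t x b).mono_set fun _ hp => ⟨ha.trans_lt hp.1, hp.2⟩)

lemma ProfileBound.norm_integral_le {w : ℝ → ℂ} {M D : ℝ} (hw : ProfileBound w M D)
    {t x a b p₀ A L : ℝ} (ht : 0 ≤ t) (ha : 0 ≤ a) (hab : a ≤ b) (hA : 0 < A) (hL : 0 < L)
    (hq : ∀ p ∈ Icc a b, L * (A ^ 2 + (p - p₀) ^ 2) ≤ (x + 3 * t * p ^ 2) ^ 2) :
    ‖∫ p in a..b, phase t x p * w p‖ ≤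
      4 * M / (A * √L) + (D + Real.pi) / (2 * √(L * A)) := by
  have hM := hw.nonneg
  have hD : 0 ≤ D := le_trans (integral_nonneg fun p => by positivity) hw.sqLe
  rcases hab.eq_or_lt with rfl | hlt
  · simp; positivity
  have hev : ∀ᶠ c in 𝓝[>] a, ‖∫ p in a..b, phase t x p * w p‖ ≤
      M * (c - a) + (4 * M / (A * √L) + (D + Real.pi) / (2 * √(L * A))) := by
    filter_upwards [Ioc_mem_nhdsGT hlt] with c hc
    rw [← intervalIntegral.integral_add_adjacent_intervals
      (hw.intervalIntegrable ha hc.1.le) (hw.intervalIntegrable (ha.trans hc.1.le) hc.2)]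
    refine (norm_add_le _ _).trans (add_le_add (hw.norm_integral_le_mul hc.1.le) ?_)
    exact hw.norm_integral_le_of_pos ht (ha.trans_lt hc.1) hc.2 hA hL
      fun p hp => hq p ⟨hc.1.le.trans hp.1, hp.2⟩
  refine ge_of_tendsto (x := 𝓝[>] a) ?_ hev
  have : Tendsto (fun c => M * (c - a) + (4 * M / (A * √L) + (D + Real.pi) / (2 * √(L * A))))
      (𝓝 a) (𝓝 (M * (a - a) + (4 * M / (A * √L) + (D + Real.pi) / (2 * √(L * A))))) := by
    apply Continuous.tendsto; fun_prop
  simpa using this.mono_left nhdsWithin_le_nhds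

/-- The spatial majorant of functions of class `E(I)`: bounded on the left and decaying like
`x^{-3/4}` on the right. -/
def decay (x : ℝ) : ℝ := (1 + max x 0) ^ (-(3 / 4) : ℝ)

lemma decay_pos (x : ℝ) : 0 < decay x :=
  Real.rpow_pos_of_pos (by positivity) _

lemma decay_le_one (x : ℝ) : decay x ≤ 1 :=
  Real.rpow_le_one_of_one_le_of_nonpos (by simp) (by norm_num)

lemma continuous_decay : Continuous decay := by
  unfold decay
  apply Continuous.rpow_const (by fun_prop)
  intro x
  left
  positivity

lemma decay_le_two_mul_decay {x y : ℝ} (h : 1 + max x 0 ≤ 2 * (1 + max y 0)) :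
    decay y ≤ 2 * decay x := by
  unfold decay
  have h1 : (2 * (1 + max y 0)) ^ (-(3 / 4) : ℝ) ≤ (1 + max x 0) ^ (-(3 / 4) : ℝ) :=
    Real.rpow_le_rpow_of_nonpos (by positivity) h (by norm_num)
  rw [Real.mul_rpow (by norm_num) (by positivity)] at h1
  have h2 : (1 / 2 : ℝ) ≤ 2 ^ (-(3 / 4) : ℝ) := by
    rw [show (1 / 2 : ℝ) = 2 ^ (-1 : ℝ) by norm_num [Real.rpow_neg_one]]
    exact Real.rpow_le_rpow_of_exponent_le (by norm_num) (by norm_num)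
  have h3 : 0 ≤ (1 + max y 0) ^ (-(3 / 4) : ℝ) := by positivity
  nlinarith

lemma decay_le_of_abs_sub_le_one {x y : ℝ} (h : |x - y| ≤ 1) : decay y ≤ 2 * decay x := by
  apply decay_le_two_mul_decay
  have := (abs_le.1 h).2
  rcases le_total x 0 with hx | hx
  · rw [max_eq_right hx]; linarith [le_max_right y 0]
  · rw [max_eq_left hx]; linarith [le_max_right y 0, le_max_left y 0]

lemma ProfileBound.norm_integral_le_of_one_le {w : ℝ → ℂ} {M D : ℝ} (hw : ProfileBound w M D)
    {τ t x R : ℝ} (hτ : 0 < τ) (ht : τ ≤ t) (hx : 1 ≤ x) (hR : 0 ≤ R) :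
    ‖∫ p in 0..R, phase t x p * w p‖ ≤
      (4 * M + D + Real.pi) / min 1 τ * x ^ (-(3 / 4) : ℝ) := by
  have hM := hw.nonneg
  have hD : 0 ≤ D := le_trans (integral_nonneg fun p => by positivity) hw.sqLe
  have hpi := Real.pi_pos
  have hx0 : 0 < x := by linarith
  set κ := min 1 τ
  have hκ : 0 < κ := lt_min one_pos hτ
  have hκ1 : κ ≤ 1 := min_le_left _ _
  have hκτ : κ ≤ τ := min_le_right _ _
  have h := hw.norm_integral_le (t := t) (x := x) (p₀ := 0) (A := √x) (L := κ ^ 2 * x)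
    (hτ.le.trans ht) le_rfl hR (by positivity) (by positivity) (by
      intro p _
      rw [Real.sq_sqrt hx0.le, sub_zero]
      have h1 : κ ^ 2 ≤ 1 := by nlinarith
      have h2 : κ ^ 2 ≤ t := by nlinarith
      have h3 : 0 ≤ x * p ^ 2 := by positivity
      nlinarith [mul_le_mul_of_nonneg_right h1 (sq_nonneg x),
        mul_le_mul_of_nonneg_right h2 h3, sq_nonneg (3 * t * p ^ 2),
        mul_nonneg (hτ.le.trans ht) h3])
  have e1 : √x * √(κ ^ 2 * x) = κ * x := by
    rw [Real.sqrt_mul (by positivity), Real.sqrt_sq hκ.le]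
    linear_combination κ * Real.mul_self_sqrt hx0.le
  have e2 : √(κ ^ 2 * x * √x) = κ * x ^ (3 / 4 : ℝ) := by
    rw [mul_assoc, Real.sqrt_mul (by positivity), Real.sqrt_sq hκ.le]
    congr 1
    rw [Real.sqrt_eq_rpow, Real.sqrt_eq_rpow]
    nth_rewrite 1 [← Real.rpow_one x]
    rw [← Real.rpow_add hx0, ← Real.rpow_mul hx0.le]
    norm_num
  rw [e1, e2] at h
  have hz : 0 < x ^ (3 / 4 : ℝ) := by positivity
  have hzx : x ^ (3 / 4 : ℝ) ≤ x := by
    nth_rewrite 2 [← Real.rpow_one x]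
    exact Real.rpow_le_rpow_of_exponent_le hx (by norm_num)
  rw [Real.rpow_neg hx0.le]
  calc _ ≤ _ := h
    _ ≤ 4 * M / (κ * x ^ (3 / 4 : ℝ)) + (D + Real.pi) / (κ * x ^ (3 / 4 : ℝ)) := by
      refine add_le_add (by gcongr) ?_
      exact div_le_div_of_nonneg_left (by positivity) (by positivity)
        (by nlinarith [mul_pos hκ hz])
    _ = _ := by field_simp; ring

lemma ProfileBound.norm_integral_le_uniform {w : ℝ → ℂ} {M D : ℝ} (hw : ProfileBound w M D)
    {τ t x : ℝ} (hτ : 0 < τ) (ht : τ ≤ t) :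
    ∀ᶠ R in atTop, ‖∫ p in 0..R, phase t x p * w p‖ ≤
      (8 * M + D + Real.pi) / τ + 2 * M := by
  have hM := hw.nonneg
  have hD : 0 ≤ D := le_trans (integral_nonneg fun p => by positivity) hw.sqLe
  have hpi := Real.pi_pos
  have ht0 : 0 < t := hτ.trans_le ht
  set p₀ := √(max (-x) 0 / (3 * t)) with hp₀
  have hp₀0 : 0 ≤ p₀ := Real.sqrt_nonneg _
  have hsq : 3 * t * p₀ ^ 2 = max (-x) 0 := by
    rw [hp₀, Real.sq_sqrt (by positivity)]; field_simp
  set m := max (p₀ - 1) 0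
  have hm0 : 0 ≤ m := le_max_right _ _
  have hm1 : p₀ - 1 ≤ m := le_max_left _ _
  have hm2 : m ≤ p₀ := max_le (by linarith) hp₀0
  filter_upwards [eventually_ge_atTop (p₀ + 1)] with R hR
  have hτ2 : √(τ ^ 2) = τ := Real.sqrt_sq hτ.le
  have hτt : τ ^ 2 ≤ t ^ 2 := by nlinarith
  have i1 : ‖∫ p in 0..m, phase t x p * w p‖ ≤ 4 * M / τ + (D + Real.pi) / (2 * τ) := by
    rcases le_total p₀ 1 with h1 | h1
    · have : m = 0 := max_eq_right (by linarith)
      rw [this]; simp; positivity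
    have hm : m = p₀ - 1 := max_eq_left (by linarith)
    have hx : 3 * t * p₀ ^ 2 = -x := by
      rcases max_cases (-x) 0 with h | h
      · rw [hsq, h.1]
      · rw [h.1] at hsq
        have : 0 < 3 * t * p₀ ^ 2 := by positivity
        linarith
    have h := hw.norm_integral_le (t := t) (x := x) (p₀ := p₀) (A := 1) (L := τ ^ 2)
      ht0.le le_rfl hm0 one_pos (by positivity) (by
        intro p hp
        have hp1 : 1 ≤ p₀ - p := by linarith [hp.2]
        have hq : x + 3 * t * p ^ 2 = -(3 * t * ((p₀ - p) * (p₀ + p))) := by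
          linear_combination hx
        rw [hq]
        have h2 : p₀ - p ≤ (p₀ - p) * (p₀ + p) := by nlinarith [hp.1]
        have h3 : (p₀ - p) ^ 2 ≤ ((p₀ - p) * (p₀ + p)) ^ 2 := by
          apply pow_le_pow_left₀ (by linarith) h2
        have h4 : 1 + (p - p₀) ^ 2 ≤ 2 * ((p₀ - p) * (p₀ + p)) ^ 2 := by nlinarith
        calc τ ^ 2 * (1 ^ 2 + (p - p₀) ^ 2) ≤ t ^ 2 * (2 * ((p₀ - p) * (p₀ + p)) ^ 2) := by
              rw [one_pow]; gcongr
          _ ≤ _ := by nlinarith [mul_nonneg (sq_nonneg t) (sq_nonneg ((p₀ - p) * (p₀ + p)))])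
    rwa [mul_one, one_mul, hτ2] at h
  have i2 : ‖∫ p in m..(p₀ + 1), phase t x p * w p‖ ≤ 2 * M :=
    (hw.norm_integral_le_mul (by linarith)).trans (by nlinarith)
  have i3 : ‖∫ p in (p₀ + 1)..R, phase t x p * w p‖ ≤
      4 * M / τ + (D + Real.pi) / (2 * τ) := by
    have h := hw.norm_integral_le (t := t) (x := x) (p₀ := p₀) (A := 1) (L := τ ^ 2)
      ht0.le (by linarith) hR one_pos (by positivity) (by
        intro p hp
        have hp1 : 1 ≤ p - p₀ := by linarith [hp.1]
        have hq : 3 * t * (p - p₀) ≤ x + 3 * t * p ^ 2 := by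
          have : -x ≤ 3 * t * p₀ ^ 2 := by rw [hsq]; exact le_max_left _ _
          have h2 : p - p₀ ≤ (p - p₀) * (p + p₀) := by nlinarith
          nlinarith [mul_le_mul_of_nonneg_left h2 ht0.le]
        have h3 : (3 * t * (p - p₀)) ^ 2 ≤ (x + 3 * t * p ^ 2) ^ 2 :=
          pow_le_pow_left₀ (mul_nonneg (by positivity) (by linarith)) hq 2
        refine le_trans ?_ h3
        have h4 : 1 + (p - p₀) ^ 2 ≤ 2 * (p - p₀) ^ 2 := by nlinarith
        calc τ ^ 2 * (1 ^ 2 + (p - p₀) ^ 2) ≤ t ^ 2 * (2 * (p - p₀) ^ 2) := by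
              rw [one_pow]; gcongr
          _ ≤ _ := by nlinarith [mul_nonneg (sq_nonneg t) (sq_nonneg (p - p₀))])
    rwa [mul_one, one_mul, hτ2] at h
  rw [← intervalIntegral.integral_add_adjacent_intervals (b := m)
      (hw.intervalIntegrable le_rfl hm0) (hw.intervalIntegrable hm0 (by linarith)),
    ← intervalIntegral.integral_add_adjacent_intervals (b := p₀ + 1)
      (hw.intervalIntegrable hm0 (by linarith)) (hw.intervalIntegrable (by linarith) hR)]
  calc _ ≤ (4 * M / τ + (D + Real.pi) / (2 * τ)) +
        (2 * M + (4 * M / τ + (D + Real.pi) / (2 * τ))) :=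
        (norm_add_le _ _).trans (add_le_add i1 ((norm_add_le _ _).trans (add_le_add i2 i3)))
    _ = _ := by field_simp; ring

lemma ProfileBound.norm_tail_le {w : ℝ → ℂ} {M D : ℝ} (hw : ProfileBound w M D)
    {τ t x X R R' : ℝ} (hτ : 0 < τ) (ht : τ ≤ t) (hx : |x| ≤ X) (hR : 1 ≤ R)
    (hRX : X ≤ τ * R ^ 2) (hRR : R ≤ R') :
    ‖∫ p in R..R', phase t x p * w p‖ ≤ (4 * M + D + Real.pi) / τ / R := by
  have hM := hw.nonneg
  have hD : 0 ≤ D := le_trans (integral_nonneg fun p => by positivity) hw.sqLe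
  have hpi := Real.pi_pos
  have hR0 : 0 < R := by linarith
  have h := hw.norm_integral_le (t := t) (x := x) (p₀ := 0) (A := 1) (L := (τ * R) ^ 2)
    (hτ.le.trans ht) hR0.le hRR one_pos (by positivity) (by
      intro p hp
      have hpR := hp.1
      have hRp : R ^ 2 ≤ p ^ 2 := by nlinarith
      have h1 : 2 * τ * p ^ 2 ≤ x + 3 * t * p ^ 2 := by
        have := (abs_le.1 hx).1
        nlinarith [mul_le_mul_of_nonneg_left hRp hτ.le,
          mul_le_mul_of_nonneg_right ht (sq_nonneg p)]
      have h2 : (2 * τ * p ^ 2) ^ 2 ≤ (x + 3 * t * p ^ 2) ^ 2 :=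
        pow_le_pow_left₀ (by positivity) h1 2
      refine le_trans ?_ h2
      have h3 : 1 + p ^ 2 ≤ 2 * p ^ 2 := by nlinarith
      calc (τ * R) ^ 2 * (1 ^ 2 + (p - 0) ^ 2) = τ ^ 2 * (R ^ 2 * (1 + p ^ 2)) := by ring
        _ ≤ τ ^ 2 * (p ^ 2 * (2 * p ^ 2)) := by gcongr
        _ ≤ _ := by nlinarith [sq_nonneg (τ * p ^ 2)])
  rw [mul_one, one_mul, Real.sqrt_sq (by positivity)] at h
  calc _ ≤ _ := h
    _ ≤ 4 * M / (τ * R) + (D + Real.pi) / (τ * R) := by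
      refine add_le_add le_rfl ?_
      exact div_le_div_of_nonneg_left (by positivity) (by positivity)
        (by nlinarith [mul_pos hτ hR0])
    _ = _ := by field_simp; ring

lemma physPartial_eq (w : ℝ → ℂ) (t x : ℝ) {R : ℝ} (hR : 0 ≤ R) :
    physPartial w t x R = (1 / Real.pi) * (∫ p in 0..R, phase t x p * w p).re := by
  rw [intervalIntegral.integral_of_le hR]; rfl

lemma abs_inv_pi_mul_re_le (z : ℂ) : |1 / Real.pi * z.re| ≤ ‖z‖ := by
  rw [abs_mul, abs_of_pos (by positivity)]
  have h1 : 1 / Real.pi ≤ 1 := by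
    rw [div_le_one Real.pi_pos]; linarith [Real.pi_gt_three]
  calc _ ≤ 1 * ‖z‖ := mul_le_mul h1 (Complex.abs_re_le_norm z) (abs_nonneg _) zero_le_one
    _ = _ := one_mul _

lemma ProfileBound.abs_le_decay {w : ℝ → ℂ} {M D τ : ℝ} (hw : ProfileBound w M D)
    (hτ : 0 < τ) {t : ℝ} (ht : τ ≤ t) {u : ℝ → ℝ} (hu : IsPhys w t u) (x : ℝ) :
    |u x| ≤ 2 * ((8 * M + D + Real.pi) / min 1 τ + 2 * M) * decay x := by
  have hM := hw.nonneg
  have hD : 0 ≤ D := le_trans (integral_nonneg fun p => by positivity) hw.sqLe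
  have hpi := Real.pi_pos
  have hκ : 0 < min 1 τ := lt_min one_pos hτ
  set K := (8 * M + D + Real.pi) / min 1 τ + 2 * M with hK
  have hK0 : 0 ≤ K := by positivity
  refine le_of_tendsto (hu x).abs ?_
  rcases le_total x 1 with hx | hx
  · filter_upwards [hw.norm_integral_le_uniform (x := x) hτ ht, eventually_ge_atTop 0] with R h hR
    rw [physPartial_eq w t x hR]
    refine (abs_inv_pi_mul_re_le _).trans (h.trans ?_)
    have h1 : (1 : ℝ) ≤ 2 * decay x := by
      have h0 : decay 0 = 1 := by simp [decay]
      rw [← h0]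
      apply decay_le_two_mul_decay
      simp only [max_self]
      linarith [max_le hx (zero_le_one' ℝ)]
    calc _ ≤ K * 1 := by
          rw [mul_one, hK]; gcongr; exact min_le_right _ _
      _ ≤ K * (2 * decay x) := by gcongr
      _ = _ := by ring
  · filter_upwards [eventually_ge_atTop 0] with R hR
    rw [physPartial_eq w t x hR]
    refine (abs_inv_pi_mul_re_le _).trans ((hw.norm_integral_le_of_one_le hτ ht hx hR).trans ?_)
    have h1 : x ^ (-(3 / 4) : ℝ) ≤ 2 * decay x := by
      have h0 : decay (x - 1) = x ^ (-(3 / 4) : ℝ) := by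
        unfold decay
        rw [max_eq_left (by linarith), add_sub_cancel]
      rw [← h0]
      apply decay_le_of_abs_sub_le_one
      simp
    calc _ ≤ K * (2 * decay x) := by
          gcongr
          rw [hK]
          have : (4 * M + D + Real.pi) / min 1 τ ≤ (8 * M + D + Real.pi) / min 1 τ := by
            gcongr; norm_num
          linarith
      _ = _ := by ring

/-- Joint continuity in time and space of the function recovered from a family of profiles. -/
lemma continuous_phys {w : ℝ → ℝ → ℂ} {M D τ : ℝ} {T : ℝ → ℝ} (hT : Continuous T)
    (hw : ∀ s, ProfileBound (w s) M D) (hτ : 0 < τ) (hτT : ∀ s, τ ≤ T s)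
    (hwc : ∀ p > 0, Continuous fun s => w s p) {u : ℝ → ℝ → ℝ}
    (hu : ∀ s, IsPhys (w s) (T s) (u s)) : Continuous fun q : ℝ × ℝ => u q.1 q.2 := by
  have hM := (hw 0).nonneg
  have hpart : ∀ R, Continuous fun q : ℝ × ℝ => physPartial (w q.1) (T q.1) q.2 R := by
    intro R
    refine continuous_const.mul (Complex.continuous_re.comp ?_)
    refine continuous_of_dominated (bound := fun _ => M) ?_ ?_ (integrableOn_const (by simp)) ?_
    · intro q
      exact ((hw q.1).integrableOn (T q.1) q.2 R).aestronglyMeasurable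
    · intro q
      refine ae_of_all _ fun p => ?_
      change ‖phase (T q.1) q.2 p * w q.1 p‖ ≤ M
      rw [norm_mul, norm_phase, one_mul]
      exact (hw q.1).bound p
    · filter_upwards [ae_restrict_mem measurableSet_Ioc] with p hp
      refine Continuous.mul (by fun_prop) ?_
      exact (hwc p hp.1).comp continuous_fst
  set C := (4 * M + D + Real.pi) / τ with hC
  have htail : ∀ q : ℝ × ℝ, ∀ X R : ℝ, |q.2| ≤ X → 1 ≤ R → X ≤ τ * R ^ 2 →
      |u q.1 q.2 - physPartial (w q.1) (T q.1) q.2 R| ≤ C / R := by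
    intro q X R hX hR hXR
    have hl := ((hu q.1 q.2).sub_const (physPartial (w q.1) (T q.1) q.2 R)).abs
    refine le_of_tendsto hl ?_
    filter_upwards [eventually_ge_atTop R] with R' hR'
    rw [physPartial_eq _ _ _ (by linarith), physPartial_eq _ _ _ (by linarith), ← mul_sub,
      ← Complex.sub_re, intervalIntegral.integral_interval_sub_left
        ((hw q.1).intervalIntegrable le_rfl (by linarith))
        ((hw q.1).intervalIntegrable le_rfl (by linarith))]
    exact (abs_inv_pi_mul_re_le _).trans
      ((hw q.1).norm_tail_le hτ (hτT q.1) hX hR hXR hR')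
  refine continuous_of_locally_uniform_approx_of_continuousAt fun q₀ U hU => ?_
  obtain ⟨δ, hδ, hδU⟩ := Metric.mem_uniformity_dist.1 hU
  set X := |q₀.2| + 1
  obtain ⟨R, hR1, hRX, hRC⟩ : ∃ R : ℝ, 1 ≤ R ∧ X ≤ τ * R ^ 2 ∧ C / R < δ := by
    have h1 : Tendsto (fun R : ℝ => τ * R ^ 2) atTop atTop :=
      (tendsto_pow_atTop two_ne_zero).const_mul_atTop hτ
    have h2 : Tendsto (fun R : ℝ => C / R) atTop (𝓝 0) := tendsto_const_nhds.div_atTop tendsto_id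
    exact ((eventually_ge_atTop 1).and
      ((h1.eventually_ge_atTop X).and (h2.eventually_lt_const hδ))).exists
  refine ⟨{q | |q.2| < X}, ?_, fun q => physPartial (w q.1) (T q.1) q.2 R,
    (hpart R).continuousAt, ?_⟩
  · exact (isOpen_lt (by fun_prop) continuous_const).mem_nhds (by simp [X])
  · intro q hq
    apply hδU
    rw [Real.dist_eq]
    exact (htail q X R (le_of_lt hq) hR1 hRX).trans_lt hRC

/-- The weight `e^{x-⟨x⟩}` of the energy estimate. -/
def weight (x : ℝ) : ℝ := Real.exp (x - jap x)

/-- The logarithmic derivative of `weight`. -/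
def slope (x : ℝ) : ℝ := 1 - x / jap x

/-- The second derivative of `weight` divided by `weight`. -/
def slopeTwo (x : ℝ) : ℝ := -(1 / jap x ^ 3) + slope x ^ 2

/-- The third derivative of `weight` divided by `weight`. -/
def slopeThree (x : ℝ) : ℝ := 3 * x / jap x ^ 5 - 3 * slope x / jap x ^ 3 + slope x ^ 3

lemma jap_sq (x : ℝ) : jap x ^ 2 = 1 + x ^ 2 := Real.sq_sqrt (by positivity)

lemma one_le_jap (x : ℝ) : 1 ≤ jap x := Real.one_le_sqrt.2 (by nlinarith [sq_nonneg x])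

lemma jap_pos (x : ℝ) : 0 < jap x := one_pos.trans_le (one_le_jap x)

lemma abs_lt_jap (x : ℝ) : |x| < jap x :=
  abs_lt_of_sq_lt_sq (by rw [jap_sq]; linarith) (jap_pos x).le

lemma hasDerivAt_jap (x : ℝ) : HasDerivAt jap (x / jap x) x := by
  have h := (((hasDerivAt_id x).pow 2).const_add 1).sqrt (by simp; positivity)
  refine h.congr_deriv ?_
  have := (jap_pos x).ne'
  simp only [jap] at *
  simp
  field_simp

lemma hasDerivAt_weight (x : ℝ) : HasDerivAt weight (slope x * weight x) x := by
  refine ((hasDerivAt_id x).sub (hasDerivAt_jap x)).exp.congr_deriv ?_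
  simp [weight, slope, mul_comm]

lemma hasDerivAt_slope (x : ℝ) : HasDerivAt slope (-(1 / jap x ^ 3)) x := by
  have hJ := (jap_pos x).ne'
  refine (((hasDerivAt_id x).div (hasDerivAt_jap x) hJ).const_sub 1).congr_deriv ?_
  simp only [id]
  field_simp
  linear_combination (-1 : ℝ) * jap_sq x

lemma hasDerivAt_slope_mul_weight (x : ℝ) :
    HasDerivAt (fun x => slope x * weight x) (slopeTwo x * weight x) x := by
  refine ((hasDerivAt_slope x).mul (hasDerivAt_weight x)).congr_deriv ?_
  simp only [slopeTwo]; ring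

lemma hasDerivAt_slopeTwo_mul_weight (x : ℝ) :
    HasDerivAt (fun x => slopeTwo x * weight x) (slopeThree x * weight x) x := by
  have hJ := (jap_pos x).ne'
  have h1 := (((hasDerivAt_jap x).pow 3).inv (pow_ne_zero 3 hJ)).neg.add
    ((hasDerivAt_slope x).pow 2)
  have h2 : HasDerivAt slopeTwo (3 * x / jap x ^ 5 - 2 * slope x / jap x ^ 3) x := by
    have : slopeTwo = -(jap ^ 3)⁻¹ + slope ^ 2 := by
      ext y; simp [slopeTwo]
    rw [this]
    refine h1.congr_deriv ?_
    simp
    field_simp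
    ring
  refine (h2.mul (hasDerivAt_weight x)).congr_deriv ?_
  simp only [slopeTwo, slopeThree]; ring

lemma slope_pos (x : ℝ) : 0 < slope x := by
  have := (abs_lt.1 (abs_lt_jap x)).2
  rw [slope, sub_pos, div_lt_one (jap_pos x)]
  exact this

lemma slope_le_two (x : ℝ) : slope x ≤ 2 := by
  have := (abs_lt.1 (abs_lt_jap x)).1
  have h : -1 ≤ x / jap x := by rw [le_div_iff₀ (jap_pos x)]; linarith
  rw [slope]; linarith

lemma weight_pos (x : ℝ) : 0 < weight x := Real.exp_pos _

lemma weight_le_one (x : ℝ) : weight x ≤ 1 := by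
  rw [weight, Real.exp_le_one_iff]
  linarith [(abs_lt.1 (abs_lt_jap x)).2]

lemma weight_le_exp (x : ℝ) : weight x ≤ Real.exp x := by
  rw [weight, Real.exp_le_exp]; linarith [jap_pos x]

lemma inv_jap_pow_le_one (x : ℝ) (n : ℕ) : 1 / jap x ^ n ≤ 1 := by
  rw [div_le_one (pow_pos (jap_pos x) n)]
  exact one_le_pow₀ (one_le_jap x)

lemma abs_slopeTwo_le (x : ℝ) : |slopeTwo x| ≤ 5 := by
  have h1 := inv_jap_pow_le_one x 3
  have h2 : 0 < 1 / jap x ^ 3 := by have := jap_pos x; positivity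
  have h3 := slope_pos x
  have h4 := slope_le_two x
  rw [slopeTwo, abs_le]
  constructor <;> nlinarith

lemma abs_slopeThree_le (x : ℝ) : |slopeThree x| ≤ 17 := by
  have hJ := jap_pos x
  have h1 := inv_jap_pow_le_one x 3
  have h2 : 0 < 1 / jap x ^ 3 := by positivity
  have h3 := slope_pos x
  have h4 := slope_le_two x
  have h5 : |3 * x / jap x ^ 5| ≤ 3 := by
    have e : 3 * x / jap x ^ 5 = 3 * (x / jap x) * (1 / jap x ^ 4) := by field_simp
    have ha : |x / jap x| ≤ 1 := by
      rw [abs_div, abs_of_pos hJ, div_le_one hJ]; exact (abs_lt_jap x).le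
    rw [e, abs_mul, abs_mul, abs_of_pos (by norm_num : (0 : ℝ) < 3),
      abs_of_pos (by positivity : 0 < 1 / jap x ^ 4)]
    calc 3 * |x / jap x| * (1 / jap x ^ 4) ≤ (3 : ℝ) * 1 * 1 := by
          gcongr; exact inv_jap_pow_le_one x 4
      _ = _ := by norm_num
  have h6 : |3 * slope x / jap x ^ 3| ≤ 6 := by
    have e : 3 * slope x / jap x ^ 3 = 3 * slope x * (1 / jap x ^ 3) := by field_simp
    rw [e, abs_of_pos (by positivity)]
    nlinarith
  have h7 : |slope x ^ 3| ≤ 8 := by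
    rw [abs_of_pos (by positivity)]
    calc _ ≤ (2 : ℝ) ^ 3 := by gcongr
      _ = _ := by norm_num
  rw [slopeThree]
  calc _ ≤ 3 + 6 + 8 := (abs_add_le _ _).trans
        (add_le_add ((abs_sub _ _).trans (add_le_add h5 h6)) h7)
    _ = _ := by norm_num

lemma decay_pow_four_le (x : ℝ) : decay x ^ 4 ≤ 2 * slope x := by
  have hJ := jap_pos x
  rcases le_total x 0 with hx | hx
  · have h1 : x / jap x ≤ 0 := div_nonpos_of_nonpos_of_nonneg hx hJ.le
    have h2 : decay x ^ 4 ≤ 1 := pow_le_one₀ (decay_pos x).le (decay_le_one x)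
    rw [slope]; linarith
  · have h1 : decay x ^ 4 = 1 / (1 + x) ^ 3 := by
      rw [decay, max_eq_left hx, ← Real.rpow_natCast, ← Real.rpow_mul (by positivity), one_div,
        ← Real.rpow_natCast, ← Real.rpow_neg (by positivity)]
      norm_num
    have hJx : jap x ≤ 1 + x := by
      apply le_of_sq_le_sq _ (by positivity)
      rw [jap_sq]; nlinarith
    have h2 : slope x = 1 / (jap x * (jap x + x)) := by
      rw [slope]
      field_simp
      linear_combination jap_sq x
    rw [h1, h2, mul_one_div, div_le_div_iff₀ (by positivity) (by positivity)]
    have h3 : jap x * (jap x + x) ≤ (1 + x) * (2 * (1 + x)) := by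
      apply mul_le_mul hJx (by linarith) (by positivity) (by positivity)
    have h4 : (1 + x) * (2 * (1 + x)) ≤ 2 * (1 + x) ^ 3 := by
      nlinarith [mul_nonneg hx (sq_nonneg (1 + x))]
    linarith

lemma continuous_jap : Continuous jap := by unfold jap; fun_prop

lemma continuous_weight : Continuous weight := by
  have := continuous_jap
  unfold weight; fun_prop

lemma continuous_slope : Continuous slope :=
  continuous_iff_continuousAt.2 fun x => (hasDerivAt_slope x).continuousAt

lemma continuous_slopeTwo : Continuous slopeTwo := by
  have := continuous_jap
  have := continuous_slope
  unfold slopeTwo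
  have : Continuous fun x => 1 / jap x ^ 3 :=
    continuous_const.div (by fun_prop) fun x => pow_ne_zero _ (jap_pos x).ne'
  fun_prop

lemma continuous_slopeThree : Continuous slopeThree := by
  have := continuous_jap
  have := continuous_slope
  unfold slopeThree
  refine Continuous.add (Continuous.sub ?_ ?_) (by fun_prop)
  · exact Continuous.div (by fun_prop) (by fun_prop) fun x => pow_ne_zero _ (jap_pos x).ne'
  · exact Continuous.div (by fun_prop) (by fun_prop) fun x => pow_ne_zero _ (jap_pos x).ne'

lemma integrable_decay_sq_mul_weight : Integrable fun x => decay x ^ 2 * weight x := by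
  have hc : Continuous fun x => decay x ^ 2 * weight x :=
    (continuous_decay.pow 2).mul continuous_weight
  rw [← integrableOn_univ, ← Iic_union_Ioi (a := (1 : ℝ))]
  refine IntegrableOn.union ?_ ?_
  · refine Integrable.mono' (integrableOn_exp_Iic 1) hc.aestronglyMeasurable ?_
    refine ae_of_all _ fun x => ?_
    have := weight_pos x
    rw [Real.norm_of_nonneg (by positivity)]
    calc _ ≤ 1 * Real.exp x := mul_le_mul (pow_le_one₀ (decay_pos x).le (decay_le_one x))
          (weight_le_exp x) this.le zero_le_one
      _ = _ := one_mul _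
  · refine Integrable.mono' (integrableOn_Ioi_rpow_of_lt (a := -(3 / 2)) (by norm_num) one_pos)
      hc.aestronglyMeasurable ?_
    filter_upwards [ae_restrict_mem measurableSet_Ioi] with x hx
    have hx0 : (0 : ℝ) < x := one_pos.trans hx
    have := weight_pos x
    rw [Real.norm_of_nonneg (by positivity)]
    have h1 : decay x ^ 2 ≤ x ^ (-(3 / 2) : ℝ) := by
      rw [decay, max_eq_left hx0.le, ← Real.rpow_natCast, ← Real.rpow_mul (by positivity)]
      norm_num
      exact Real.rpow_le_rpow_of_nonpos hx0 (by linarith) (by norm_num)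
    calc _ ≤ x ^ (-(3 / 2) : ℝ) * 1 := mul_le_mul h1 (weight_le_one x) this.le (by positivity)
      _ = _ := mul_one _

/-- A standard sequence of bump functions on the line shrinking to the origin. -/
def bumpSeq (n : ℕ) : ContDiffBump (0 : ℝ) where
  rIn := 1 / (2 * (n + 1))
  rOut := 1 / (n + 1)
  rIn_pos := by positivity
  rIn_lt_rOut := by
    apply one_div_lt_one_div_of_lt (by positivity)
    linarith [(by positivity : (0 : ℝ) < n + 1)]

/-- The associated mollifiers of unit mass. -/
def mollifier (n : ℕ) : ℝ → ℝ := (bumpSeq n).normed volume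

lemma contDiff_mollifier (n : ℕ) : ContDiff ℝ ∞ (mollifier n) := (bumpSeq n).contDiff_normed

lemma mollifier_nonneg (n : ℕ) (x : ℝ) : 0 ≤ mollifier n x := (bumpSeq n).nonneg_normed x

lemma integral_mollifier (n : ℕ) : ∫ x, mollifier n x = 1 := (bumpSeq n).integral_normed

lemma tsupport_mollifier (n : ℕ) : tsupport (mollifier n) = Metric.closedBall 0 (1 / (n + 1)) :=
  (bumpSeq n).tsupport_normed_eq

lemma hasCompactSupport_mollifier (n : ℕ) : HasCompactSupport (mollifier n) :=
  (bumpSeq n).hasCompactSupport_normed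

lemma mollifier_eq_zero {n : ℕ} {x : ℝ} (h : 1 / (n + 1) < |x|) : mollifier n x = 0 := by
  apply image_eq_zero_of_notMem_tsupport
  rw [tsupport_mollifier, Metric.mem_closedBall, dist_zero_right, Real.norm_eq_abs, not_le]
  exact h

/-- Convolution of real functions on the line. -/
def conv (f k : ℝ → ℝ) (x : ℝ) : ℝ := ∫ y, f y * k (x - y)

lemma tendsto_conv_mollifier {f : ℝ → ℝ} (hf : Continuous f) (x : ℝ) :
    Tendsto (fun n => conv f (mollifier n) x) atTop (𝓝 (f x)) := by
  have h := ContDiffBump.convolution_tendsto_right_of_continuous (μ := volume) (φ := bumpSeq)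
    (l := atTop) (g := f) tendsto_one_div_add_atTop_nhds_zero_nat hf x
  refine h.congr fun n => ?_
  rw [convolution_lsmul_swap, conv]
  simp only [smul_eq_mul, mul_comm, mollifier]

/-- The fundamental lemma giving a classical derivative from a weak one. -/
lemma hasDerivAt_of_weak {A B : ℝ → ℝ} {t₁ t₂ : ℝ} (hA : Continuous A) (hB : Continuous B)
    (h : ∀ η : ℝ → ℝ, ContDiff ℝ ∞ η → HasCompactSupport η → tsupport η ⊆ Ioo t₁ t₂ →
      ∫ s, (deriv η s * A s + η s * B s) = 0) {t : ℝ} (ht : t ∈ Ioo t₁ t₂) :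
    HasDerivAt A (B t) t := by
  set P : ℝ → ℝ := fun s => ∫ σ in t₁..s, B σ with hP
  have hPd : ∀ s, HasDerivAt P (B s) s := fun s => hB.integral_hasStrictDerivAt t₁ s |>.hasDerivAt
  have hPc : Continuous P := continuous_iff_continuousAt.2 fun s => (hPd s).continuousAt
  set g : ℝ → ℝ := fun s => A s - P s with hg
  have hgc : Continuous g := hA.sub hPc
  have key : ∀ η : ℝ → ℝ, ContDiff ℝ ∞ η → HasCompactSupport η → tsupport η ⊆ Ioo t₁ t₂ →
      ∫ s, g s * deriv η s = 0 := by
    intro η hη hηc hηs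
    have hη' : Continuous (deriv η) := hη.continuous_deriv (by simp)
    have hdc : HasCompactSupport (deriv η) := hηc.deriv
    have i1 : Integrable fun s => deriv η s * A s + η s * B s :=
      ((hη'.mul hA).integrable_of_hasCompactSupport hdc.mul_right).add
        ((hη.continuous.mul hB).integrable_of_hasCompactSupport hηc.mul_right)
    have i2 : Integrable fun s => deriv η s * P s + η s * B s :=
      ((hη'.mul hPc).integrable_of_hasCompactSupport hdc.mul_right).add
        ((hη.continuous.mul hB).integrable_of_hasCompactSupport hηc.mul_right)
    have e2 : ∫ s, (deriv η s * P s + η s * B s) = 0 :=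
      integral_eq_zero_of_hasDerivAt_of_integrable (f := fun s => η s * P s)
        (fun s => ((hη.differentiable (by simp)) s).hasDerivAt.mul (hPd s)) i2
        ((hη.continuous.mul hPc).integrable_of_hasCompactSupport hηc.mul_right)
    have e1 := h η hη hηc hηs
    calc ∫ s, g s * deriv η s = ∫ s, ((deriv η s * A s + η s * B s)
          - (deriv η s * P s + η s * B s)) := by
          congr 1; ext s; simp only [hg]; ring
      _ = 0 := by rw [integral_sub i1 i2, e1, e2, sub_zero]
  have hconst : ∀ a ∈ Ioo t₁ t₂, ∀ b ∈ Ioo t₁ t₂, g a = g b := by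
    intro a ha b hb
    have hlim := (tendsto_conv_mollifier hgc a).sub (tendsto_conv_mollifier hgc b)
    refine sub_eq_zero.1 (tendsto_nhds_unique hlim (tendsto_const_nhds.congr' ?_))
    have hr : Tendsto (fun n : ℕ => (1 : ℝ) / (n + 1)) atTop (𝓝 0) :=
      tendsto_one_div_add_atTop_nhds_zero_nat
    have hev1 := hr.eventually_lt_const
      (lt_min (sub_pos.2 (lt_min ha.1 hb.1)) (sub_pos.2 (max_lt ha.2 hb.2)))
    filter_upwards [hev1] with n hn
    set r : ℝ := 1 / ((n : ℝ) + 1)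
    have hr1 : r < min a b - t₁ := hn.trans_le (min_le_left _ _)
    have hr2 : r < t₂ - max a b := hn.trans_le (min_le_right _ _)
    set k : ℝ → ℝ := fun s => mollifier n (a - s) - mollifier n (b - s) with hk
    have hkd : ContDiff ℝ ∞ k :=
      ((contDiff_mollifier n).comp (contDiff_const.sub contDiff_id)).sub
        ((contDiff_mollifier n).comp (contDiff_const.sub contDiff_id))
    have hinteg : ∀ c, Integrable fun s => mollifier n (c - s) := fun c =>
      ((bumpSeq n).integrable_normed (μ := volume)).comp_sub_left c
    have hk0 : ∀ s, s ≤ min a b - r ∨ max a b + r ≤ s → s ≠ min a b - r → s ≠ max a b + r →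
        k s = 0 := by
      intro s hs h1 h2
      have hfar : ∀ c, c = a ∨ c = b → mollifier n (c - s) = 0 := by
        intro c hc
        apply mollifier_eq_zero
        have hc1 : min a b ≤ c := by rcases hc with rfl | rfl <;> simp
        have hc2 : c ≤ max a b := by rcases hc with rfl | rfl <;> simp
        rcases hs with hs | hs
        · exact lt_of_lt_of_le (by have := lt_of_le_of_ne hs h1; simp only [r] at *; linarith)
            (le_abs_self _)
        · exact lt_of_lt_of_le (by
            have := lt_of_le_of_ne hs h2.symm; simp only [r] at *; linarith) (neg_le_abs _)
      simp only [hk]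
      rw [hfar a (Or.inl rfl), hfar b (Or.inr rfl), sub_zero]
    have hkI : Integrable k := (hinteg a).sub (hinteg b)
    have hk_total : ∫ s, k s = 0 := by
      simp only [hk]
      rw [integral_sub (hinteg a) (hinteg b), integral_sub_left_eq_self (mollifier n),
        integral_sub_left_eq_self (mollifier n), sub_self]
    set η : ℝ → ℝ := fun s => ∫ σ in Iic s, k σ with hη
    have hηd : ∀ s, HasDerivAt η (k s) s := by
      intro s
      have e : η = fun s => (∫ σ in Iic t₁, k σ) + ∫ σ in t₁..s, k σ := by
        ext s
        rw [← intervalIntegral.integral_Iic_sub_Iic hkI.integrableOn hkI.integrableOn]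
        simp [hη]
      rw [e]
      exact (hkd.continuous.integral_hasStrictDerivAt t₁ s).hasDerivAt.const_add _
    have hη_deriv : deriv η = k := funext fun s => (hηd s).deriv
    have hη_smooth : ContDiff ℝ ∞ η := by
      rw [contDiff_infty_iff_deriv, hη_deriv]
      exact ⟨fun s => (hηd s).differentiableAt, hkd⟩
    have hη_zero : ∀ s, s ∉ Icc (min a b - r) (max a b + r) → η s = 0 := by
      intro s hs
      rw [mem_Icc, not_and_or, not_le, not_le] at hs
      rcases hs with hs | hs
      · refine setIntegral_eq_zero_of_forall_eq_zero fun σ hσ => ?_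
        have hσ' : σ < min a b - r := lt_of_le_of_lt hσ hs
        have := min_le_max (a := a) (b := b)
        have hr0 : 0 < r := by positivity
        exact hk0 σ (Or.inl hσ'.le) hσ'.ne (by linarith)
      · rw [hη]
        have h2 : ∫ σ in Ioi s, k σ = 0 := by
          refine setIntegral_eq_zero_of_forall_eq_zero fun σ hσ => ?_
          have hσ' : max a b + r < σ := hs.trans hσ
          have := min_le_max (a := a) (b := b)
          have hr0 : 0 < r := by positivity
          exact hk0 σ (Or.inr hσ'.le) (by linarith) hσ'.ne'
        have h3 := intervalIntegral.integral_Iic_add_Ioi (b := s) hkI.integrableOn hkI.integrableOn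
        simp only
        linarith
    have hts : tsupport η ⊆ Icc (min a b - r) (max a b + r) := by
      refine closure_minimal (fun s hs => ?_) isClosed_Icc
      by_contra hc
      exact hs (hη_zero s hc)
    have hfin := key η hη_smooth (HasCompactSupport.of_support_subset_isCompact isCompact_Icc
      ((subset_tsupport _).trans hts))
      (hts.trans fun s hs => ⟨by linarith [hs.1], by linarith [hs.2]⟩)
    rw [hη_deriv] at hfin
    have hgi : ∀ c, Integrable fun s => g s * mollifier n (c - s) := by
      intro c
      apply Continuous.integrable_of_hasCompactSupport
      · exact hgc.mul ((contDiff_mollifier n).continuous.comp (by fun_prop))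
      · apply HasCompactSupport.mul_left
        exact (hasCompactSupport_mollifier n).comp_homeomorph (Homeomorph.subLeft c)
    rw [conv, conv, ← integral_sub (hgi a) (hgi b), ← hfin]
    congr 1; ext s; simp only [hk]; ring
  have heq : A =ᶠ[𝓝 t] fun s => P s + g t := by
    filter_upwards [isOpen_Ioo.mem_nhds ht] with s hs
    have := hconst s hs t ht
    simp only [hg] at this ⊢
    linarith
  exact ((hPd t).add_const _).congr_of_eventuallyEq heq

/-- Smooth convolution kernels supported in `[-1, 1]`. -/
structure IsKernel (k : ℝ → ℝ) : Prop where
  smooth : ContDiff ℝ ∞ k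
  supp : tsupport k ⊆ Metric.closedBall 0 1

namespace IsKernel

variable {k f : ℝ → ℝ}

lemma mollifier (n : ℕ) : IsKernel (mollifier n) where
  smooth := contDiff_mollifier n
  supp := by
    rw [tsupport_mollifier]
    apply Metric.closedBall_subset_closedBall
    rw [div_le_one (by positivity)]
    linarith [(Nat.cast_nonneg n : (0 : ℝ) ≤ n)]

lemma hasCompactSupport (hk : IsKernel k) : HasCompactSupport k :=
  HasCompactSupport.of_support_subset_isCompact (isCompact_closedBall 0 1)
    ((subset_tsupport k).trans hk.supp)

lemma deriv (hk : IsKernel k) : IsKernel (deriv k) where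
  smooth := (contDiff_infty_iff_deriv.1 hk.smooth).2
  supp := (closure_minimal (support_deriv_subset) (isClosed_tsupport k)).trans hk.supp

lemma hasDerivAt (hk : IsKernel k) (x : ℝ) : HasDerivAt k (_root_.deriv k x) x :=
  ((hk.smooth.differentiable (by simp)) x).hasDerivAt

lemma eq_zero (hk : IsKernel k) {x : ℝ} (hx : 1 < |x|) : k x = 0 := by
  apply image_eq_zero_of_notMem_tsupport
  intro h
  have := hk.supp h
  rw [Metric.mem_closedBall, dist_zero_right, Real.norm_eq_abs] at this
  linarith

lemma comp_sub_smooth (hk : IsKernel k) (x : ℝ) : ContDiff ℝ ∞ fun y => k (x - y) :=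
  hk.smooth.comp (contDiff_const.sub contDiff_id)

lemma comp_sub_hasCompactSupport (hk : IsKernel k) (x : ℝ) :
    HasCompactSupport fun y => k (x - y) :=
  hk.hasCompactSupport.comp_homeomorph (Homeomorph.subLeft x)

lemma deriv_comp_sub (hk : IsKernel k) (x : ℝ) :
    (_root_.deriv fun y => k (x - y)) = fun y => -_root_.deriv k (x - y) := by
  ext y
  have h := (hk.hasDerivAt (x - y)).comp y ((hasDerivAt_id y).const_sub x)
  have h' : HasDerivAt (fun y => k (x - y)) (-_root_.deriv k (x - y)) y :=
    h.congr_deriv (by ring)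
  exact h'.deriv

lemma integrable_mul_comp_sub (hk : IsKernel k) (hf : Continuous f) (x : ℝ) :
    Integrable fun y => f y * k (x - y) :=
  (hf.mul (hk.comp_sub_smooth x).continuous).integrable_of_hasCompactSupport
    (hk.comp_sub_hasCompactSupport x).mul_left

lemma hasDerivAt_conv (hk : IsKernel k) (hf : Continuous f) (x : ℝ) :
    HasDerivAt (conv f k) (conv f (_root_.deriv k) x) x :=
  HasCompactSupport.hasDerivAt_convolution_right (ContinuousLinearMap.mul ℝ ℝ)
    hf.locallyIntegrable hk.hasCompactSupport (hk.smooth.of_le (by simp)) x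

lemma continuous_conv (hk : IsKernel k) (hf : Continuous f) : Continuous (conv f k) :=
  continuous_iff_continuousAt.2 fun x => (hk.hasDerivAt_conv hf x).continuousAt

lemma abs_conv_le (hk : IsKernel k) {g : ℝ → ℝ} {c : ℝ}
    (hfg : ∀ y, |f y| ≤ g y) {x : ℝ} (hg : ∀ y, |x - y| ≤ 1 → g y ≤ c) :
    |conv f k x| ≤ (∫ y, |k y|) * c := by
  have hki : Integrable fun y => |k (x - y)| :=
    ((hk.comp_sub_smooth x).continuous.integrable_of_hasCompactSupport
      (hk.comp_sub_hasCompactSupport x)).abs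
  have h1 : |conv f k x| ≤ ∫ y, |k (x - y)| * c := by
    rw [conv, ← Real.norm_eq_abs]
    refine norm_integral_le_of_norm_le (hki.mul_const c) (ae_of_all _ fun y => ?_)
    rw [norm_mul, Real.norm_eq_abs, Real.norm_eq_abs, mul_comm]
    rcases le_or_gt |x - y| 1 with h | h
    · exact mul_le_mul_of_nonneg_left ((hfg y).trans (hg y h)) (abs_nonneg _)
    · simp [hk.eq_zero h]
  rwa [integral_mul_const, integral_sub_left_eq_self (fun y => |k y|)] at h1

lemma abs_conv_le_decay (hk : IsKernel k) {K : ℝ} (hK : 0 ≤ K) (n : ℕ)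
    (hf : ∀ y, |f y| ≤ K * decay y ^ n) (x : ℝ) :
    |conv f k x| ≤ (∫ y, |k y|) * (K * (2 * decay x) ^ n) := by
  refine hk.abs_conv_le hf fun y hy => ?_
  have := decay_le_of_abs_sub_le_one hy
  have := (decay_pos y).le
  gcongr

lemma continuous_conv_time (hk : IsKernel k) {f : ℝ → ℝ → ℝ} {K : ℝ}
    (hf : Continuous fun q : ℝ × ℝ => f q.1 q.2) (hb : ∀ t y, |f t y| ≤ K) (x : ℝ) :
    Continuous fun t => conv (f t) k x := by
  have hkc := (hk.comp_sub_smooth x).continuous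
  have hfx : ∀ t, Continuous (f t) := fun t => hf.comp (by fun_prop : Continuous fun y => (t, y))
  have hft : ∀ y, Continuous fun t => f t y := fun y =>
    hf.comp (by fun_prop : Continuous fun t => (t, y))
  have hki : Integrable fun y => K * |k (x - y)| :=
    (hkc.integrable_of_hasCompactSupport (hk.comp_sub_hasCompactSupport x)).abs.const_mul K
  refine continuous_of_dominated (bound := fun y => K * |k (x - y)|) ?_ ?_ hki ?_
  · exact fun t => ((hfx t).mul hkc).aestronglyMeasurable
  · refine fun t => ae_of_all _ fun y => ?_
    rw [norm_mul, Real.norm_eq_abs, Real.norm_eq_abs]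
    exact mul_le_mul_of_nonneg_right (hb t y) (abs_nonneg _)
  · exact ae_of_all _ fun y => (hft y).mul continuous_const

end IsKernel

lemma integrable_of_abs_le {h : ℝ → ℝ} (hc : Continuous h) {C : ℝ}
    (hb : ∀ x, |h x| ≤ C * (decay x ^ 2 * weight x)) : Integrable h :=
  (integrable_decay_sq_mul_weight.const_mul C).mono' hc.aestronglyMeasurable (ae_of_all _ hb)

lemma abs_mul_mul_le {a b s d ψ C S : ℝ} (hψ : 0 ≤ ψ) (hC : 0 ≤ C) (hd : 0 ≤ d)
    (ha : |a| ≤ C * d) (hb : |b| ≤ C * d) (hs : |s| ≤ S) :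
    |a * b * (s * ψ)| ≤ C ^ 2 * S * (d ^ 2 * ψ) := by
  rw [abs_mul, abs_mul, abs_mul, abs_of_nonneg hψ]
  have hS : 0 ≤ S := (abs_nonneg _).trans hs
  calc |a| * |b| * (|s| * ψ) ≤ (C * d) * (C * d) * (S * ψ) := by gcongr
    _ = _ := by ring

lemma integrable_mul_mul {a b s : ℝ → ℝ} (ha : Continuous a) (hb : Continuous b)
    (hs : Continuous s) {C S : ℝ} (hC : 0 ≤ C) (ha' : ∀ x, |a x| ≤ C * decay x)
    (hb' : ∀ x, |b x| ≤ C * decay x) (hs' : ∀ x, |s x| ≤ S) :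
    Integrable fun x => a x * b x * (s x * weight x) :=
  integrable_of_abs_le ((ha.mul hb).mul (hs.mul continuous_weight)) fun x =>
    abs_mul_mul_le (weight_pos x).le hC (decay_pos x).le (ha' x) (hb' x) (hs' x)

/-- The integrand on the right-hand side of the energy inequality. -/
def energyDensity (a b : ℝ → ℝ) (x : ℝ) : ℝ :=
  (18 * a x ^ 2 + 9 * (b x ^ 2 / slope x)) * weight x

lemma abs_energyDensity_le {a b : ℝ → ℝ} {C : ℝ} {x : ℝ}
    (ha : |a x| ≤ C * decay x) (hb : |b x| ≤ C * decay x ^ 3) :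
    |energyDensity a b x| ≤ 36 * C ^ 2 * (decay x ^ 2 * weight x) := by
  have hd := decay_pos x
  have hs := slope_pos x
  have hψ := weight_pos x
  have h1 : a x ^ 2 ≤ C ^ 2 * decay x ^ 2 := by
    rw [← mul_pow, ← sq_abs]
    gcongr
  have h2 : b x ^ 2 / slope x ≤ 2 * C ^ 2 * decay x ^ 2 := by
    rw [div_le_iff₀ hs]
    calc b x ^ 2 ≤ (C * decay x ^ 3) ^ 2 := by rw [← sq_abs]; gcongr
      _ = C ^ 2 * decay x ^ 2 * decay x ^ 4 := by ring
      _ ≤ C ^ 2 * decay x ^ 2 * (2 * slope x) := by gcongr; exact decay_pow_four_le x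
      _ = _ := by ring
  rw [energyDensity, abs_of_nonneg (by positivity)]
  calc _ ≤ (18 * (C ^ 2 * decay x ^ 2) + 9 * (2 * C ^ 2 * decay x ^ 2)) * weight x := by gcongr
    _ = _ := by ring

lemma continuous_energyDensity {a b : ℝ → ℝ} (ha : Continuous a) (hb : Continuous b) :
    Continuous (energyDensity a b) := by
  have h : Continuous fun x => b x ^ 2 / slope x :=
    (hb.pow 2).div continuous_slope fun x => (slope_pos x).ne'
  have := continuous_weight
  unfold energyDensity
  fun_prop

/-- The weighted energy inequality for the mollified linear flow with a source. -/
lemma integral_energy_le {W₀ W₁ W₂ W₃ G₀ G₁ : ℝ → ℝ} {C : ℝ}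
    (h₀ : ∀ x, HasDerivAt W₀ (W₁ x) x) (h₁ : ∀ x, HasDerivAt W₁ (W₂ x) x)
    (h₂ : ∀ x, HasDerivAt W₂ (W₃ x) x) (hG : ∀ x, HasDerivAt G₀ (G₁ x) x)
    (c₃ : Continuous W₃) (cG : Continuous G₁)
    (b₀ : ∀ x, |W₀ x| ≤ C * decay x) (b₁ : ∀ x, |W₁ x| ≤ C * decay x)
    (b₂ : ∀ x, |W₂ x| ≤ C * decay x) (b₃ : ∀ x, |W₃ x| ≤ C * decay x)
    (bG₀ : ∀ x, |G₀ x| ≤ C * decay x ^ 3) (bG₁ : ∀ x, |G₁ x| ≤ C * decay x) :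
    ∫ x, 2 * W₀ x * (-W₃ x - G₁ x) * weight x ≤ ∫ x, energyDensity W₀ G₀ x := by
  have hC : 0 ≤ C := by
    by_contra h
    have := (abs_nonneg _).trans (b₀ 0)
    nlinarith [decay_pos 0]
  have c₀ : Continuous W₀ := continuous_iff_continuousAt.2 fun x => (h₀ x).continuousAt
  have c₁ : Continuous W₁ := continuous_iff_continuousAt.2 fun x => (h₁ x).continuousAt
  have c₂ : Continuous W₂ := continuous_iff_continuousAt.2 fun x => (h₂ x).continuousAt
  have cG₀ : Continuous G₀ := continuous_iff_continuousAt.2 fun x => (hG x).continuousAt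
  have bG : ∀ x, |G₀ x| ≤ C * decay x := fun x => (bG₀ x).trans (by
    have h1 := decay_le_one x
    have h0 := decay_pos x
    exact mul_le_mul_of_nonneg_left (pow_le_of_le_one h0.le h1 (by norm_num)) hC)
  have bs : ∀ x, |slope x| ≤ 2 := fun x => by
    rw [abs_of_pos (slope_pos x)]; exact slope_le_two x
  have one : ∀ x : ℝ, |(fun _ => (1 : ℝ)) x| ≤ 1 := by simp
  have c1 : Continuous fun _ : ℝ => (1 : ℝ) := continuous_const
  have cs := continuous_slope
  -- the flux and its derivative
  set Φ : ℝ → ℝ := fun x => -2 * (W₀ x * W₂ x * (1 * weight x)) + W₁ x * W₁ x * (1 * weight x)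
    + 2 * (W₀ x * W₁ x * (slope x * weight x)) - W₀ x * W₀ x * (slopeTwo x * weight x)
    - 2 * (W₀ x * G₀ x * (1 * weight x)) with hΦ
  set Φ' : ℝ → ℝ := fun x => -2 * (W₀ x * W₃ x * (1 * weight x))
    + 3 * (W₁ x * W₁ x * (slope x * weight x)) - W₀ x * W₀ x * (slopeThree x * weight x)
    - 2 * (W₁ x * G₀ x * (1 * weight x)) - 2 * (W₀ x * G₁ x * (1 * weight x))
    - 2 * (W₀ x * G₀ x * (slope x * weight x)) with hΦ'
  have hder : ∀ x, HasDerivAt Φ (Φ' x) x := by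
    intro x
    have hψ := (hasDerivAt_weight x).const_mul 1
    have hψ₁ := hasDerivAt_slope_mul_weight x
    have hψ₂ := hasDerivAt_slopeTwo_mul_weight x
    have H := ((((((((h₀ x).mul (h₂ x)).mul hψ).const_mul (-2)).add
      (((h₁ x).mul (h₁ x)).mul hψ)).add
      ((((h₀ x).mul (h₁ x)).mul hψ₁).const_mul 2)).sub
      (((h₀ x).mul (h₀ x)).mul hψ₂)).sub
      ((((h₀ x).mul (hG x)).mul hψ).const_mul 2))
    refine H.congr_deriv ?_
    simp only [hΦ', Pi.mul_apply]
    ring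
  have iΦ : Integrable Φ := by
    refine Integrable.sub (Integrable.sub (Integrable.add (Integrable.add ?_ ?_) ?_) ?_) ?_
    · exact (integrable_mul_mul c₀ c₂ c1 hC b₀ b₂ one).const_mul _
    · exact integrable_mul_mul c₁ c₁ c1 hC b₁ b₁ one
    · exact (integrable_mul_mul c₀ c₁ cs hC b₀ b₁ bs).const_mul _
    · exact integrable_mul_mul c₀ c₀ continuous_slopeTwo hC b₀ b₀ abs_slopeTwo_le
    · exact (integrable_mul_mul c₀ cG₀ c1 hC b₀ bG one).const_mul _
  have iΦ' : Integrable Φ' := by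
    refine Integrable.sub (Integrable.sub (Integrable.sub (Integrable.sub
      (Integrable.add ?_ ?_) ?_) ?_) ?_) ?_
    · exact (integrable_mul_mul c₀ c₃ c1 hC b₀ b₃ one).const_mul _
    · exact (integrable_mul_mul c₁ c₁ cs hC b₁ b₁ bs).const_mul _
    · exact integrable_mul_mul c₀ c₀ continuous_slopeThree hC b₀ b₀ abs_slopeThree_le
    · exact (integrable_mul_mul c₁ cG₀ c1 hC b₁ bG one).const_mul _
    · exact (integrable_mul_mul c₀ cG c1 hC b₀ bG₁ one).const_mul _
    · exact (integrable_mul_mul c₀ cG₀ cs hC b₀ bG bs).const_mul _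
  have iE : Integrable (energyDensity W₀ G₀) :=
    integrable_of_abs_le (continuous_energyDensity c₀ cG₀) fun x =>
      abs_energyDensity_le (b₀ x) (bG₀ x)
  have iL : Integrable fun x => 2 * W₀ x * (-W₃ x - G₁ x) * weight x := by
    refine (((integrable_mul_mul c₀ c₃ c1 hC b₀ b₃ one).const_mul (-2)).sub
      ((integrable_mul_mul c₀ cG c1 hC b₀ bG₁ one).const_mul 2)).congr (ae_of_all _ fun x => ?_)
    simp only [Pi.sub_apply]
    ring
  have hzero := integral_eq_zero_of_hasDerivAt_of_integrable hder iΦ' iΦ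
  calc _ ≤ ∫ x, (Φ' x + energyDensity W₀ G₀ x) := by
        refine integral_mono iL (iΦ'.add iE) fun x => ?_
        have hs := slope_pos x
        have hs2 := slope_le_two x
        have hψ := weight_pos x
        have h3 := (abs_le.1 (abs_slopeThree_le x)).2
        have key : -3 * W₁ x ^ 2 * slope x + W₀ x ^ 2 * slopeThree x + 2 * W₁ x * G₀ x
            + 2 * W₀ x * G₀ x * slope x ≤ 18 * W₀ x ^ 2 + 9 * (G₀ x ^ 2 / slope x) := by
          set z := G₀ x / slope x with hz
          have hGz : G₀ x = slope x * z := by rw [hz]; field_simp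
          have hzz : G₀ x ^ 2 / slope x = slope x * z ^ 2 := by rw [hGz]; field_simp
          rw [hzz, hGz]
          have e1 : 2 * W₁ x * (slope x * z) ≤ 3 * W₁ x ^ 2 * slope x + slope x * z ^ 2 := by
            nlinarith [mul_nonneg hs.le (sq_nonneg (W₁ x - z)),
              mul_nonneg hs.le (sq_nonneg (W₁ x))]
          have e2 : 2 * W₀ x * (slope x * z) * slope x ≤ W₀ x ^ 2 + 8 * (slope x * z ^ 2) := by
            have e3 : slope x ^ 3 ≤ 8 := by
              calc slope x ^ 3 ≤ (2 : ℝ) ^ 3 := by gcongr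
                _ = 8 := by norm_num
            nlinarith [sq_nonneg (W₀ x - slope x ^ 2 * z),
              mul_nonneg (sub_nonneg.2 e3) (mul_nonneg hs.le (sq_nonneg z))]
          have e4 : W₀ x ^ 2 * slopeThree x ≤ W₀ x ^ 2 * 17 := by gcongr
          linarith
        have := mul_le_mul_of_nonneg_right key hψ.le
        simp only [hΦ', energyDensity]
        linarith
    _ = _ := by rw [integral_add iΦ' iE, hzero, zero_add]

lemma continuous_integral_of_abs_le {g : ℝ → ℝ → ℝ} {C : ℝ} (hx : ∀ s, Continuous (g s))
    (hs : ∀ x, Continuous fun s => g s x)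
    (hb : ∀ s x, |g s x| ≤ C * (decay x ^ 2 * weight x)) :
    Continuous fun s => ∫ x, g s x :=
  continuous_of_dominated (fun s => (hx s).aestronglyMeasurable) (fun s => ae_of_all _ (hb s))
    (integrable_decay_sq_mul_weight.const_mul C) (ae_of_all _ hs)

/-- A continuous weak solution of `∂ₜ w + ∂ₓ³ w + ∂ₓ F = 0` on `(t₁, t₂)`, vanishing at `t₁`, with a
source controlled by `w`. -/
structure WeakSol (t₁ t₂ K : ℝ) (w F : ℝ → ℝ → ℝ) : Prop where
  contw : Continuous fun q : ℝ × ℝ => w q.1 q.2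
  contF : Continuous fun q : ℝ × ℝ => F q.1 q.2
  wle : ∀ t x, |w t x| ≤ K * decay x
  Fle : ∀ t x, |F t x| ≤ K * decay x ^ 2 * |w t x|
  weak : ∀ η h : ℝ → ℝ, ContDiff ℝ ∞ η → HasCompactSupport η → tsupport η ⊆ Ioo t₁ t₂ →
    ContDiff ℝ ∞ h → HasCompactSupport h →
    ∫ s, (deriv η s * (∫ y, w s y * h y) +
      η s * (∫ y, (w s y * deriv (deriv (deriv h)) y + F s y * deriv h y))) = 0
  init : ∀ x, w t₁ x = 0

namespace WeakSol

variable {t₁ t₂ K : ℝ} {w F : ℝ → ℝ → ℝ} {k : ℝ → ℝ}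

lemma nonneg (hw : WeakSol t₁ t₂ K w F) : 0 ≤ K := by
  by_contra h
  have := (abs_nonneg _).trans (hw.wle 0 0)
  nlinarith [decay_pos 0]

lemma abs_le (hw : WeakSol t₁ t₂ K w F) (t x : ℝ) : |w t x| ≤ K :=
  (hw.wle t x).trans (mul_le_of_le_one_right hw.nonneg (decay_le_one x))

lemma source_le_decay (hw : WeakSol t₁ t₂ K w F) (t x : ℝ) :
    |F t x| ≤ K ^ 2 * decay x ^ 3 := by
  have h0 := hw.nonneg
  have h1 := decay_pos x
  calc |F t x| ≤ K * decay x ^ 2 * |w t x| := hw.Fle t x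
    _ ≤ K * decay x ^ 2 * (K * decay x) := by gcongr; exact hw.wle t x
    _ = _ := by ring

lemma abs_source_le (hw : WeakSol t₁ t₂ K w F) (t x : ℝ) : |F t x| ≤ K ^ 2 :=
  (hw.source_le_decay t x).trans (mul_le_of_le_one_right (by positivity)
    (pow_le_one₀ (decay_pos x).le (decay_le_one x)))

lemma continuous_apply (hw : WeakSol t₁ t₂ K w F) (t : ℝ) : Continuous (w t) :=
  hw.contw.comp (by fun_prop : Continuous fun y => (t, y))

lemma continuous_source_apply (hw : WeakSol t₁ t₂ K w F) (t : ℝ) : Continuous (F t) :=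
  hw.contF.comp (by fun_prop : Continuous fun y => (t, y))

lemma hasDerivAt_conv (hw : WeakSol t₁ t₂ K w F) (hk : IsKernel k) (x : ℝ) {t : ℝ}
    (ht : t ∈ Ioo t₁ t₂) :
    HasDerivAt (fun s => conv (w s) k x)
      (-conv (w t) (deriv (deriv (deriv k))) x - conv (F t) (deriv k) x) t := by
  have h3 := hk.deriv.deriv.deriv
  refine hasDerivAt_of_weak (t₁ := t₁) (t₂ := t₂)
    (B := fun t => -conv (w t) (deriv (deriv (deriv k))) x - conv (F t) (deriv k) x)
    (hk.continuous_conv_time hw.contw hw.abs_le x)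
    ((h3.continuous_conv_time hw.contw hw.abs_le x).neg.sub
      (hk.deriv.continuous_conv_time hw.contF hw.abs_source_le x)) ?_ ht
  intro η hη hηc hηs
  rw [← hw.weak η (fun y => k (x - y)) hη hηc hηs (hk.comp_sub_smooth x)
    (hk.comp_sub_hasCompactSupport x)]
  congr 1
  ext s
  have e1 := hk.deriv_comp_sub x
  have e2 : deriv (fun y => -deriv k (x - y)) = fun y => deriv (deriv k) (x - y) := by
    rw [deriv.fun_neg', hk.deriv.deriv_comp_sub x]
    simp
  have e3 := hk.deriv.deriv.deriv_comp_sub x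
  rw [e1, e2, e3, integral_add]
  · simp only [conv, mul_neg, integral_neg]
    ring
  · simp only [mul_neg]
    exact (h3.integrable_mul_comp_sub (hw.continuous_apply s) x).neg
  · simp only [mul_neg]
    exact (hk.deriv.integrable_mul_comp_sub (hw.continuous_source_apply s) x).neg

lemma abs_conv_le (hw : WeakSol t₁ t₂ K w F) (hk : IsKernel k) (t x : ℝ) :
    |conv (w t) k x| ≤ (∫ y, |k y|) * (2 * K + 8 * K ^ 2) * decay x := by
  have h0 := hw.nonneg
  have h1 := decay_pos x
  have h2 : 0 ≤ ∫ y, |k y| := integral_nonneg fun y => abs_nonneg _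
  have h := hk.abs_conv_le_decay h0 1 (fun y => by simpa using hw.wle t y) x
  calc _ ≤ _ := h
    _ = (∫ y, |k y|) * (2 * K + 0) * decay x := by ring
    _ ≤ _ := by gcongr; positivity

lemma abs_conv_source_le (hw : WeakSol t₁ t₂ K w F) (hk : IsKernel k) (t x : ℝ) :
    |conv (F t) k x| ≤ (∫ y, |k y|) * (2 * K + 8 * K ^ 2) * decay x ^ 3 := by
  have h0 := hw.nonneg
  have h1 := decay_pos x
  have h2 : 0 ≤ ∫ y, |k y| := integral_nonneg fun y => abs_nonneg _
  have h := hk.abs_conv_le_decay (sq_nonneg K) 3 (hw.source_le_decay t) x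
  calc _ ≤ _ := h
    _ = (∫ y, |k y|) * (0 + 8 * K ^ 2) * decay x ^ 3 := by ring
    _ ≤ _ := by gcongr; positivity

lemma continuous_conv_energy (hw : WeakSol t₁ t₂ K w F) (hk : IsKernel k) :
    Continuous fun s => ∫ x, energyDensity (conv (w s) k) (conv (F s) k) x := by
  refine continuous_integral_of_abs_le (fun s => continuous_energyDensity
    (hk.continuous_conv (hw.continuous_apply s)) (hk.continuous_conv (hw.continuous_source_apply s)))
    (fun x => ?_) (fun s x => abs_energyDensity_le (hw.abs_conv_le hk s x)
      (hw.abs_conv_source_le hk s x))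
  have h1 := hk.continuous_conv_time hw.contw hw.abs_le x
  have h2 := hk.continuous_conv_time hw.contF hw.abs_source_le x
  unfold energyDensity
  fun_prop

lemma conv_energy_le (hw : WeakSol t₁ t₂ K w F) (hk : IsKernel k) {t : ℝ}
    (ht : t ∈ Icc t₁ t₂) :
    ∫ x, conv (w t) k x ^ 2 * weight x ≤
      ∫ s in t₁..t, ∫ x, energyDensity (conv (w s) k) (conv (F s) k) x := by
  set c : (ℝ → ℝ) → ℝ := fun k => (∫ y, |k y|) * (2 * K + 8 * K ^ 2) with hc
  have hK := hw.nonneg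
  have c0 : ∀ k, 0 ≤ c k := fun k =>
    mul_nonneg (integral_nonneg fun y => abs_nonneg _) (by positivity)
  set k₁ := deriv k
  set k₂ := deriv k₁
  set k₃ := deriv k₂
  have hk₁ : IsKernel k₁ := hk.deriv
  have hk₂ : IsKernel k₂ := hk₁.deriv
  have hk₃ : IsKernel k₃ := hk₂.deriv
  set C := c k + c k₁ + c k₂ + c k₃ with hC
  have C0 : 0 ≤ C := by have := c0 k; have := c0 k₁; have := c0 k₂; have := c0 k₃; linarith
  have hle : c k ≤ C ∧ c k₁ ≤ C ∧ c k₂ ≤ C ∧ c k₃ ≤ C := by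
    have := c0 k; have := c0 k₁; have := c0 k₂; have := c0 k₃
    refine ⟨?_, ?_, ?_, ?_⟩ <;> linarith
  have bw : ∀ {κ : ℝ → ℝ}, IsKernel κ → c κ ≤ C → ∀ s x, |conv (w s) κ x| ≤ C * decay x :=
    fun hκ h s x => (hw.abs_conv_le hκ s x).trans
      (mul_le_mul_of_nonneg_right h (decay_pos x).le)
  have bF : ∀ {κ : ℝ → ℝ}, IsKernel κ → c κ ≤ C → ∀ s x, |conv (F s) κ x| ≤ C * decay x ^ 3 :=
    fun hκ h s x => (hw.abs_conv_source_le hκ s x).trans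
      (mul_le_mul_of_nonneg_right h (pow_nonneg (decay_pos x).le 3))
  have bF₁ : ∀ s x, |conv (F s) k₁ x| ≤ C * decay x := fun s x => (bF hk₁ hle.2.1 s x).trans
    (mul_le_mul_of_nonneg_left
      (pow_le_of_le_one (decay_pos x).le (decay_le_one x) (by norm_num)) C0)
  have cw : ∀ {κ : ℝ → ℝ}, IsKernel κ → ∀ s, Continuous (conv (w s) κ) :=
    fun hκ s => hκ.continuous_conv (hw.continuous_apply s)
  have cF : ∀ {κ : ℝ → ℝ}, IsKernel κ → ∀ s, Continuous (conv (F s) κ) :=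
    fun hκ s => hκ.continuous_conv (hw.continuous_source_apply s)
  have cψ := continuous_weight
  have cS : ∀ s, Continuous fun x => conv (w s) k x ^ 2 * weight x := fun s =>
    ((cw hk s).pow 2).mul cψ
  have bS : ∀ s x, |conv (w s) k x ^ 2 * weight x| ≤ C ^ 2 * 1 * (decay x ^ 2 * weight x) := by
    intro s x
    have := abs_mul_mul_le (weight_pos x).le C0 (decay_pos x).le (bw hk hle.1 s x)
      (bw hk hle.1 s x) (s := 1) (S := 1) (by simp)
    rwa [one_mul, ← sq] at this
  have contS : Continuous fun s => ∫ x, conv (w s) k x ^ 2 * weight x := by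
    refine continuous_integral_of_abs_le cS (fun x => ?_) bS
    have := hk.continuous_conv_time hw.contw hw.abs_le x
    fun_prop
  have derS : ∀ s ∈ Ioo t₁ t₂, HasDerivAt (fun s => ∫ x, conv (w s) k x ^ 2 * weight x)
      (∫ x, 2 * conv (w s) k x * (-conv (w s) k₃ x - conv (F s) k₁ x) * weight x) s := by
    intro s hs
    refine (hasDerivAt_integral_of_dominated_loc_of_deriv_le
      (F' := fun s x => 2 * conv (w s) k x * (-conv (w s) k₃ x - conv (F s) k₁ x) * weight x)
      (bound := fun x => C ^ 2 * 4 * (decay x ^ 2 * weight x))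
      (isOpen_Ioo.mem_nhds hs) (Eventually.of_forall fun r => (cS r).aestronglyMeasurable)
      (integrable_of_abs_le (cS s) (bS s)) ?_ ?_
      (integrable_decay_sq_mul_weight.const_mul _) ?_).2
    · exact ((((cw hk s).const_mul 2).mul ((cw hk₃ s).neg.sub (cF hk₁ s))).mul
        cψ).aestronglyMeasurable
    · refine ae_of_all _ fun x r _ => ?_
      have hψ := (weight_pos x).le
      have hd := (decay_pos x).le
      rw [Real.norm_eq_abs, abs_mul, abs_mul, abs_mul, abs_of_nonneg hψ, abs_two]
      have e1 := bw hk hle.1 r x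
      have e2 : |-conv (w r) k₃ x - conv (F r) k₁ x| ≤ 2 * (C * decay x) := by
        have := abs_sub (-conv (w r) k₃ x) (conv (F r) k₁ x)
        rw [abs_neg] at this
        linarith [bw hk₃ hle.2.2.2 r x, bF₁ r x]
      calc _ ≤ 2 * (C * decay x) * (2 * (C * decay x)) * weight x := by gcongr
        _ = _ := by ring
    · refine ae_of_all _ fun x r hr => ?_
      refine (((hw.hasDerivAt_conv hk x hr).pow 2).mul_const (weight x)).congr_deriv ?_
      simp only [Nat.cast_ofNat, Nat.add_one_sub_one, pow_one, k₁, k₂, k₃]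
  have hmain := intervalIntegral.sub_le_integral_of_hasDeriv_right_of_le
    (g := fun s => ∫ x, conv (w s) k x ^ 2 * weight x)
    (φ := fun s => ∫ x, energyDensity (conv (w s) k) (conv (F s) k) x) ht.1 contS.continuousOn
    (fun s hs => (derS s ⟨hs.1, hs.2.trans_le ht.2⟩).hasDerivWithinAt)
    (hw.continuous_conv_energy hk).continuousOn.integrableOn_Icc
    (fun s hs => integral_energy_le
      (fun x => hk.hasDerivAt_conv (hw.continuous_apply s) x)
      (fun x => hk₁.hasDerivAt_conv (hw.continuous_apply s) x)
      (fun x => hk₂.hasDerivAt_conv (hw.continuous_apply s) x)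
      (fun x => hk.hasDerivAt_conv (hw.continuous_source_apply s) x)
      (cw hk₃ s) (cF hk₁ s) (bw hk hle.1 s) (bw hk₁ hle.2.1 s) (bw hk₂ hle.2.2.1 s)
      (bw hk₃ hle.2.2.2 s) (bF hk hle.1 s) (bF₁ s))
  have hinit : ∫ x, conv (w t₁) k x ^ 2 * weight x = 0 := by
    simp [conv, hw.init]
  simpa only [hinit, sub_zero] using hmain

lemma integral_abs_mollifier (n : ℕ) : ∫ y, |mollifier n y| = 1 := by
  simp only [abs_of_nonneg (mollifier_nonneg n _), integral_mollifier]

lemma energyDensity_le (hw : WeakSol t₁ t₂ K w F) (t x : ℝ) :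
    energyDensity (w t) (F t) x ≤ (18 + 18 * K ^ 2) * (w t x ^ 2 * weight x) := by
  have hs := slope_pos x
  have hψ := weight_pos x
  have h : F t x ^ 2 / slope x ≤ 2 * K ^ 2 * w t x ^ 2 := by
    rw [div_le_iff₀ hs]
    calc F t x ^ 2 ≤ (K * decay x ^ 2 * |w t x|) ^ 2 := by
          rw [← sq_abs (F t x)]; gcongr; exact hw.Fle t x
      _ = K ^ 2 * w t x ^ 2 * decay x ^ 4 := by rw [mul_pow, sq_abs]; ring
      _ ≤ K ^ 2 * w t x ^ 2 * (2 * slope x) := by gcongr; exact decay_pow_four_le x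
      _ = _ := by ring
  rw [energyDensity]
  calc _ ≤ (18 * w t x ^ 2 + 9 * (2 * K ^ 2 * w t x ^ 2)) * weight x := by gcongr
    _ = _ := by ring

lemma abs_sq_mul_weight_le (hw : WeakSol t₁ t₂ K w F) (t x : ℝ) :
    |w t x ^ 2 * weight x| ≤ K ^ 2 * (decay x ^ 2 * weight x) := by
  have hψ := weight_pos x
  rw [abs_of_nonneg (by positivity), ← mul_assoc, ← mul_pow, ← sq_abs (w t x)]
  gcongr
  exact hw.wle t x

lemma continuous_energy (hw : WeakSol t₁ t₂ K w F) :
    Continuous fun s => ∫ x, w s x ^ 2 * weight x := by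
  have cψ := continuous_weight
  refine continuous_integral_of_abs_le (fun s => ((hw.continuous_apply s).pow 2).mul cψ)
    (fun x => ?_) hw.abs_sq_mul_weight_le
  have : Continuous fun s => w s x := hw.contw.comp (by fun_prop : Continuous fun s => (s, x))
  fun_prop

lemma energy_le (hw : WeakSol t₁ t₂ K w F) {t : ℝ} (ht : t ∈ Icc t₁ t₂) :
    ∫ x, w t x ^ 2 * weight x ≤
      (18 + 18 * K ^ 2) * ∫ s in t₁..t, ∫ x, w s x ^ 2 * weight x := by
  have cψ := continuous_weight
  have hK := hw.nonneg
  set C := 2 * K + 8 * K ^ 2 with hC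
  have C0 : 0 ≤ C := by positivity
  have bw : ∀ n s x, |conv (w s) (mollifier n) x| ≤ C * decay x := fun n s x => by
    simpa [integral_abs_mollifier] using hw.abs_conv_le (IsKernel.mollifier n) s x
  have bF : ∀ n s x, |conv (F s) (mollifier n) x| ≤ C * decay x ^ 3 := fun n s x => by
    simpa [integral_abs_mollifier] using hw.abs_conv_source_le (IsKernel.mollifier n) s x
  have tw : ∀ s x, Tendsto (fun n => conv (w s) (mollifier n) x) atTop (𝓝 (w s x)) :=
    fun s => tendsto_conv_mollifier (hw.continuous_apply s)
  have tF : ∀ s x, Tendsto (fun n => conv (F s) (mollifier n) x) atTop (𝓝 (F s x)) :=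
    fun s => tendsto_conv_mollifier (hw.continuous_source_apply s)
  have bE : ∀ n s x, |energyDensity (conv (w s) (mollifier n)) (conv (F s) (mollifier n)) x| ≤
      36 * C ^ 2 * (decay x ^ 2 * weight x) := fun n s x =>
    abs_energyDensity_le (bw n s x) (bF n s x)
  have lim₁ : Tendsto (fun n => ∫ x, conv (w t) (mollifier n) x ^ 2 * weight x) atTop
      (𝓝 (∫ x, w t x ^ 2 * weight x)) := by
    refine tendsto_integral_of_dominated_convergence (fun x => C ^ 2 * (decay x ^ 2 * weight x))
      (fun n => ?_) (integrable_decay_sq_mul_weight.const_mul _)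
      (fun n => ae_of_all _ fun x => ?_) (ae_of_all _ fun x => ((tw t x).pow 2).mul_const _)
    · exact ((((IsKernel.mollifier n).continuous_conv (hw.continuous_apply t)).pow 2).mul
        cψ).aestronglyMeasurable
    · have hψ := weight_pos x
      rw [Real.norm_eq_abs, abs_of_nonneg (by positivity), ← mul_assoc, ← mul_pow,
        ← sq_abs (conv _ _ _)]
      gcongr
      exact bw n t x
  have lim₂ : ∀ s, Tendsto
      (fun n => ∫ x, energyDensity (conv (w s) (mollifier n)) (conv (F s) (mollifier n)) x) atTop
      (𝓝 (∫ x, energyDensity (w s) (F s) x)) := by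
    intro s
    refine tendsto_integral_of_dominated_convergence
      (fun x => 36 * C ^ 2 * (decay x ^ 2 * weight x))
      (fun n => ?_) (integrable_decay_sq_mul_weight.const_mul _)
      (fun n => ae_of_all _ (bE n s)) (ae_of_all _ fun x => ?_)
    · exact (continuous_energyDensity
        ((IsKernel.mollifier n).continuous_conv (hw.continuous_apply s))
        ((IsKernel.mollifier n).continuous_conv (hw.continuous_source_apply s))).aestronglyMeasurable
    · exact ((((tw s x).pow 2).const_mul 18).add
        ((((tF s x).pow 2).div_const _).const_mul 9)).mul_const _
  have lim₃ : Tendsto (fun n => ∫ s in t₁..t,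
      ∫ x, energyDensity (conv (w s) (mollifier n)) (conv (F s) (mollifier n)) x) atTop
      (𝓝 (∫ s in t₁..t, ∫ x, energyDensity (w s) (F s) x)) := by
    refine intervalIntegral.tendsto_integral_filter_of_dominated_convergence
      (fun _ => ∫ x, 36 * C ^ 2 * (decay x ^ 2 * weight x))
      (Eventually.of_forall fun n => ?_) (Eventually.of_forall fun n => ae_of_all _ fun s _ => ?_)
      intervalIntegrable_const (ae_of_all _ fun s _ => lim₂ s)
    · exact (hw.continuous_conv_energy (IsKernel.mollifier n)).aestronglyMeasurable
    · exact norm_integral_le_of_norm_le (integrable_decay_sq_mul_weight.const_mul _)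
        (ae_of_all _ (bE n s))
  have key := le_of_tendsto_of_tendsto' lim₁ lim₃ fun n =>
    hw.conv_energy_le (IsKernel.mollifier n) ht
  have bFd : ∀ s x, |F s x| ≤ C * decay x ^ 3 := fun s x =>
    le_of_tendsto' (tF s x).abs fun n => bF n s x
  have bwd : ∀ s x, |w s x| ≤ C * decay x := fun s x =>
    le_of_tendsto' (tw s x).abs fun n => bw n s x
  have cE : Continuous fun s => ∫ x, energyDensity (w s) (F s) x := by
    refine continuous_integral_of_abs_le (fun s => continuous_energyDensity
      (hw.continuous_apply s) (hw.continuous_source_apply s)) (fun x => ?_)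
      (fun s x => abs_energyDensity_le (bwd s x) (bFd s x))
    have h1 : Continuous fun s => w s x := hw.contw.comp (by fun_prop : Continuous fun s => (s, x))
    have h2 : Continuous fun s => F s x := hw.contF.comp (by fun_prop : Continuous fun s => (s, x))
    unfold energyDensity
    fun_prop
  refine key.trans ?_
  rw [← intervalIntegral.integral_const_mul]
  refine intervalIntegral.integral_mono_on ht.1 (cE.intervalIntegrable _ _)
    ((hw.continuous_energy.const_mul _).intervalIntegrable _ _) fun s _ => ?_
  rw [← integral_const_mul]
  exact integral_mono
    (integrable_of_abs_le (continuous_energyDensity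
      (hw.continuous_apply s) (hw.continuous_source_apply s)) fun x =>
        abs_energyDensity_le (bwd s x) (bFd s x))
    ((integrable_of_abs_le (((hw.continuous_apply s).pow 2).mul cψ)
      (hw.abs_sq_mul_weight_le s)).const_mul _) (hw.energyDensity_le s)

lemma eq_zero (hw : WeakSol t₁ t₂ K w F) {t : ℝ} (ht : t ∈ Icc t₁ t₂) (x : ℝ) : w t x = 0 := by
  set N : ℝ → ℝ := fun s => ∫ x, w s x ^ 2 * weight x with hN
  set L : ℝ := 18 + 18 * K ^ 2 with hL
  have hNc : Continuous N := hw.continuous_energy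
  have hN0 : ∀ s, 0 ≤ N s := fun s => integral_nonneg fun x =>
    mul_nonneg (sq_nonneg _) (weight_pos x).le
  set P : ℝ → ℝ := fun s => ∫ r in t₁..s, N r with hP
  have hPd : ∀ s, HasDerivAt P (N s) s := fun s => (hNc.integral_hasStrictDerivAt t₁ s).hasDerivAt
  have hP0 : ∀ s ∈ Icc t₁ t₂, 0 ≤ P s := fun s hs =>
    intervalIntegral.integral_nonneg hs.1 fun r _ => hN0 r
  have hPz : ∀ s ∈ Icc t₁ t₂, P s = 0 := by
    intro s hs
    have h := norm_le_gronwallBound_of_norm_deriv_right_le (f := P) (f' := N) (δ := 0) (K := L)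
      (ε := 0) (a := t₁) (b := t₂)
      (fun s _ => (hPd s).continuousAt.continuousWithinAt)
      (fun s _ => (hPd s).hasDerivWithinAt) (by simp [hP]) (fun s hs => by
        have hs' := Ico_subset_Icc_self hs
        rw [Real.norm_of_nonneg (hN0 s), Real.norm_of_nonneg (hP0 s hs'), add_zero]
        exact hw.energy_le hs') s hs
    simpa [gronwallBound_ε0_δ0] using h
  have hNt : N t = 0 := le_antisymm (by
    have := hw.energy_le ht
    rw [show (∫ s in t₁..t, ∫ x, w s x ^ 2 * weight x) = 0 from hPz t ht, mul_zero] at this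
    exact this) (hN0 t)
  have hc : Continuous fun x => w t x ^ 2 * weight x :=
    ((hw.continuous_apply t).pow 2).mul continuous_weight
  have hae := (integral_eq_zero_iff_of_nonneg (fun x => mul_nonneg (sq_nonneg _) (weight_pos x).le)
    (integrable_of_abs_le hc (hw.abs_sq_mul_weight_le t))).1 hNt
  have hz : w t x ^ 2 * weight x = 0 :=
    congrFun ((hc.ae_eq_iff_eq volume continuous_const).1 hae) x
  simpa [(weight_pos x).ne'] using hz

end WeakSol

lemma MemE.profileBound {w : ℝ → ℂ} (hw : MemE w) : ProfileBound w (supN w) (dL2 w ^ 2) := by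
  have hinteg : IntegrableOn (fun p => ‖deriv w p‖ ^ 2) (Ioi 0) :=
    (memLp_two_iff_integrable_sq_norm hw.derivL2.1).1 hw.derivL2
  refine ⟨hw.diff, fun p => le_ciSup hw.bdd p, hw.derivL2.1, hinteg, ?_⟩
  have h0 : 0 ≤ ∫ p in Ioi (0 : ℝ), ‖deriv w p‖ ^ 2 := integral_nonneg fun p => by positivity
  rw [dL2, hw.derivL2.eLpNorm_eq_integral_rpow_norm (by simp) (by simp)]
  simp only [ENNReal.toReal_ofNat, Real.rpow_ofNat]
  rw [ENNReal.toReal_ofReal (by positivity), ← Real.rpow_natCast, ← Real.rpow_mul h0]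
  norm_num

lemma ESol.exists_profileBound {t₁ t₂ : ℝ} (ht₁ : 0 < t₁) (u : ESol (Icc t₁ t₂))
    (hu : FiniteEnorm (Icc t₁ t₂) u) :
    ∃ M D, ∀ t ∈ Icc t₁ t₂, ProfileBound (u.w t) M D := by
  obtain ⟨B, hB⟩ := hu
  refine ⟨B, (B / t₂ ^ (-(1 / 6 : ℝ))) ^ 2, fun t ht => ?_⟩
  have h := (u.memE t ht).profileBound
  have hle : EnormP t (u.w t) ≤ B := hB (mem_image_of_mem _ ht)
  have hs : 0 ≤ supN (u.w t) := h.nonneg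
  have hd : 0 ≤ dL2 (u.w t) := ENNReal.toReal_nonneg
  have htp : 0 < t := ht₁.trans_le ht.1
  have hr : 0 < t ^ (-(1 / 6 : ℝ)) := Real.rpow_pos_of_pos htp _
  have hr₂ : 0 < t₂ ^ (-(1 / 6 : ℝ)) := Real.rpow_pos_of_pos (htp.trans_le ht.2) _
  have hrr : t₂ ^ (-(1 / 6 : ℝ)) ≤ t ^ (-(1 / 6 : ℝ)) :=
    Real.rpow_le_rpow_of_nonpos htp ht.2 (by norm_num)
  rw [EnormP] at hle
  have h1 : supN (u.w t) ≤ B := by nlinarith [mul_nonneg hr.le hd]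
  have h2 : dL2 (u.w t) ≤ B / t₂ ^ (-(1 / 6 : ℝ)) := by
    rw [le_div_iff₀ hr₂]
    nlinarith [mul_le_mul_of_nonneg_left hrr hd]
  exact ⟨h.diff, fun p => (h.bound p).trans h1, h.meas, h.sqInt, h.sqLe.trans (by gcongr)⟩

/-- A function of class `E(I)` on a compact interval extends to a jointly continuous function
with the spatial decay of the Airy function. -/
lemma ESol.exists_extension {t₁ t₂ : ℝ} (ht₁ : 0 < t₁) (ht₁₂ : t₁ ≤ t₂) (u : ESol (Icc t₁ t₂))
    (hu : FiniteEnorm (Icc t₁ t₂) u) :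
    ∃ (K : ℝ) (U : ℝ → ℝ → ℝ), (Continuous fun q : ℝ × ℝ => U q.1 q.2) ∧
      (∀ t x, |U t x| ≤ K * decay x) ∧ ∀ t ∈ Icc t₁ t₂, U t = u.u t := by
  obtain ⟨M, D, h⟩ := u.exists_profileBound ht₁ hu
  set T : ℝ → ℝ := fun s => projIcc t₁ t₂ ht₁₂ s with hT
  have hTc : Continuous T := continuous_subtype_val.comp continuous_projIcc
  have hTm : ∀ s, T s ∈ Icc t₁ t₂ := fun s => (projIcc t₁ t₂ ht₁₂ s).2
  refine ⟨_, fun s => u.u (T s), ?_, fun s x =>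
    (h _ (hTm s)).abs_le_decay ht₁ (hTm s).1 (u.isPhys _ (hTm s)) x, fun t ht => ?_⟩
  · refine continuous_phys (w := fun s => u.w (T s)) hTc (fun s => h _ (hTm s)) ht₁
      (fun s => (hTm s).1) (fun p hp => ?_) (fun s => u.isPhys _ (hTm s))
    exact u.contt.comp_continuous (by fun_prop : Continuous fun s => (T s, p))
      fun s => ⟨hTm s, hp⟩
  · simp only [hT, projIcc_of_mem ht₁₂ ht]

section TestFunctions

variable {η h : ℝ → ℝ}

/-- The pairing of a field and a source with a test function of product form. -/
def pairing (η h : ℝ → ℝ) (w F : ℝ → ℝ → ℝ) (q : ℝ × ℝ) : ℝ :=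
  w q.1 q.2 * (deriv η q.1 * h q.2 + η q.1 * deriv (deriv (deriv h)) q.2)
    + F q.1 q.2 * (η q.1 * deriv h q.2)

lemma contDiff_deriv (hh : ContDiff ℝ ∞ h) : ContDiff ℝ ∞ (deriv h) :=
  (contDiff_infty_iff_deriv.1 hh).2

lemma integrable_pairing {w F : ℝ → ℝ → ℝ} (hη : ContDiff ℝ ∞ η) (hηc : HasCompactSupport η)
    (hh : ContDiff ℝ ∞ h) (hhc : HasCompactSupport h)
    (hw : Continuous fun q : ℝ × ℝ => w q.1 q.2) (hF : Continuous fun q : ℝ × ℝ => F q.1 q.2) :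
    Integrable (pairing η h w F) := by
  have c1 := hη.continuous
  have c2 := (contDiff_deriv hη).continuous
  have c3 := hh.continuous
  have c4 := (contDiff_deriv hh).continuous
  have c5 := (contDiff_deriv (contDiff_deriv (contDiff_deriv hh))).continuous
  have hc : Continuous (pairing η h w F) := by unfold pairing; fun_prop
  refine hc.integrable_of_hasCompactSupport ?_
  refine HasCompactSupport.intro (hηc.isCompact.prod hhc.isCompact) fun q hq => ?_
  rw [mem_prod, not_and_or] at hq
  rcases hq with hq | hq
  · have e2 : deriv η q.1 = 0 :=
      image_eq_zero_of_notMem_tsupport fun h' => hq (closure_minimal support_deriv_subset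
        (isClosed_tsupport η) h')
    simp [pairing, image_eq_zero_of_notMem_tsupport hq, e2]
  · have sub : ∀ g : ℝ → ℝ, tsupport (deriv g) ⊆ tsupport g := fun g =>
      closure_minimal support_deriv_subset (isClosed_tsupport g)
    have e1 : deriv h q.2 = 0 := image_eq_zero_of_notMem_tsupport fun h' => hq (sub _ h')
    have e3 : deriv (deriv (deriv h)) q.2 = 0 :=
      image_eq_zero_of_notMem_tsupport fun h' => hq (sub _ (sub _ (sub _ h')))
    simp [pairing, image_eq_zero_of_notMem_tsupport hq, e1, e3]

lemma integral_pairing {w F : ℝ → ℝ → ℝ} (hη : ContDiff ℝ ∞ η) (hηc : HasCompactSupport η)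
    (hh : ContDiff ℝ ∞ h) (hhc : HasCompactSupport h)
    (hw : Continuous fun q : ℝ × ℝ => w q.1 q.2) (hF : Continuous fun q : ℝ × ℝ => F q.1 q.2) :
    ∫ q, pairing η h w F q = ∫ s, (deriv η s * (∫ y, w s y * h y) +
      η s * (∫ y, (w s y * deriv (deriv (deriv h)) y + F s y * deriv h y))) := by
  rw [Measure.volume_eq_prod, integral_prod _ (integrable_pairing hη hηc hh hhc hw hF)]
  congr 1
  ext s
  have hws : Continuous (w s) := hw.comp (by fun_prop : Continuous fun y => (s, y))
  have hFs : Continuous (F s) := hF.comp (by fun_prop : Continuous fun y => (s, y))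
  have i1 : Integrable fun y => w s y * h y :=
    (hws.mul hh.continuous).integrable_of_hasCompactSupport hhc.mul_left
  have h3 := contDiff_deriv (contDiff_deriv (contDiff_deriv hh))
  have i2 : Integrable fun y => w s y * deriv (deriv (deriv h)) y + F s y * deriv h y :=
    ((hws.mul h3.continuous).integrable_of_hasCompactSupport hhc.deriv.deriv.deriv.mul_left).add
      ((hFs.mul (contDiff_deriv hh).continuous).integrable_of_hasCompactSupport hhc.deriv.mul_left)
  rw [← integral_const_mul, ← integral_const_mul, ← integral_add (i1.const_mul _) (i2.const_mul _)]
  congr 1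
  ext y
  simp only [pairing]
  ring

lemma IsSolOn.integral_pairing_eq_zero {ε t₁ t₂ : ℝ} {u U : ℝ → ℝ → ℝ}
    (hu : IsSolOn ε u (Icc t₁ t₂)) (hU : ∀ t ∈ Icc t₁ t₂, U t = u t)
    (hη : ContDiff ℝ ∞ η) (hηc : HasCompactSupport η) (hηs : tsupport η ⊆ Ioo t₁ t₂)
    (hh : ContDiff ℝ ∞ h) (hhc : HasCompactSupport h) :
    ∫ q, pairing η h U (fun t x => ε * U t x ^ 3) q = 0 := by
  have hsub : tsupport (fun q : ℝ × ℝ => η q.1 * h q.2) ⊆ tsupport η ×ˢ tsupport h := by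
    refine closure_minimal (fun q hq => ?_) ((isClosed_tsupport η).prod (isClosed_tsupport h))
    exact ⟨subset_tsupport _ (left_ne_zero_of_mul hq), subset_tsupport _ (right_ne_zero_of_mul hq)⟩
  have hsol := hu (fun s y => η s * h y)
    ((hη.comp contDiff_fst).mul (hh.comp contDiff_snd))
    (HasCompactSupport.of_support_subset_isCompact (hηc.isCompact.prod hhc.isCompact)
      ((subset_tsupport _).trans hsub))
    (hsub.trans (by rw [interior_Icc]; exact prod_mono hηs (subset_univ _)))
  rw [← hsol]
  congr 1
  ext q
  have d0 : dt1 (fun s y => η s * h y) q.1 q.2 = deriv η q.1 * h q.2 := by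
    simp [dt1]
  have dx : ∀ g : ℝ → ℝ, dx1 (fun s y => η s * g y) = fun s y => η s * deriv g y := by
    intro g
    ext s y
    simp [dx1]
  rw [d0, dx, dx, dx, pairing]
  by_cases hq : q.1 ∈ Icc t₁ t₂
  · rw [hU _ hq]
  · have hn : q.1 ∉ tsupport η := fun h' => hq (Ioo_subset_Icc_self (hηs h'))
    have e2 : deriv η q.1 = 0 :=
      image_eq_zero_of_notMem_tsupport fun h' => hn (closure_minimal support_deriv_subset
        (isClosed_tsupport η) h')
    simp [image_eq_zero_of_notMem_tsupport hn, e2]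

end TestFunctions

lemma abs_cube_sub_cube_le {a b c : ℝ} (ha : |a| ≤ c) (hb : |b| ≤ c) :
    |a ^ 3 - b ^ 3| ≤ 3 * c ^ 2 * |a - b| := by
  have hc : 0 ≤ c := (abs_nonneg _).trans ha
  have h : |a ^ 2 + a * b + b ^ 2| ≤ 3 * c ^ 2 := by
    calc _ ≤ |a ^ 2 + a * b| + |b ^ 2| := abs_add_le _ _
      _ ≤ |a ^ 2| + |a * b| + |b ^ 2| := by gcongr; exact abs_add_le _ _
      _ = |a| ^ 2 + |a| * |b| + |b| ^ 2 := by rw [abs_pow, abs_mul, abs_pow]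
      _ ≤ c ^ 2 + c * c + c ^ 2 := by gcongr
      _ = _ := by ring
  rw [show a ^ 3 - b ^ 3 = (a ^ 2 + a * b + b ^ 2) * (a - b) by ring, abs_mul]
  gcongr

/-- forward uniqueness for mKdV in `E`. -/
theorem mkdv_forward_uniqueness (ε : ℝ) (hε : ε = 1 ∨ ε = -1)
    (t₁ t₂ : ℝ) (ht₁ : 0 < t₁) (ht₁₂ : t₁ < t₂)
    (u v : ESol (Icc t₁ t₂))
    (hu : IsSolOn ε u.u (Icc t₁ t₂)) (hv : IsSolOn ε v.u (Icc t₁ t₂))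
    (hufin : FiniteEnorm (Icc t₁ t₂) u) (hvfin : FiniteEnorm (Icc t₁ t₂) v)
    (hinit : u.u t₁ = v.u t₁) :
    ∀ t ∈ Icc t₁ t₂, u.u t = v.u t := by
  obtain ⟨K₁, U, cU, bU, eU⟩ := u.exists_extension ht₁ ht₁₂.le hufin
  obtain ⟨K₂, V, cV, bV, eV⟩ := v.exists_extension ht₁ ht₁₂.le hvfin
  set K := max K₁ K₂ with hK
  have bU' : ∀ t x, |U t x| ≤ K * decay x := fun t x => (bU t x).trans
    (mul_le_mul_of_nonneg_right (le_max_left _ _) (decay_pos x).le)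
  have bV' : ∀ t x, |V t x| ≤ K * decay x := fun t x => (bV t x).trans
    (mul_le_mul_of_nonneg_right (le_max_right _ _) (decay_pos x).le)
  have hK0 : 0 ≤ K := by
    by_contra h
    have := (abs_nonneg _).trans (bU' 0 0)
    nlinarith [decay_pos 0]
  have habs : |ε| = 1 := by rcases hε with rfl | rfl <;> simp
  have hw : WeakSol t₁ t₂ (2 * K + 3 * K ^ 2) (fun t x => U t x - V t x)
      (fun t x => ε * U t x ^ 3 - ε * V t x ^ 3) := by
    refine ⟨cU.sub cV, by fun_prop, fun t x => ?_, fun t x => ?_, ?_, fun x => ?_⟩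
    · have hd := decay_pos x
      calc _ ≤ |U t x| + |V t x| := abs_sub _ _
        _ ≤ K * decay x + K * decay x := add_le_add (bU' t x) (bV' t x)
        _ = (2 * K + 0) * decay x := by ring
        _ ≤ _ := by gcongr; positivity
    · rw [← mul_sub, abs_mul, habs, one_mul]
      calc _ ≤ 3 * (K * decay x) ^ 2 * |U t x - V t x| := abs_cube_sub_cube_le (bU' t x) (bV' t x)
        _ = (0 + 3 * K ^ 2) * decay x ^ 2 * |U t x - V t x| := by ring
        _ ≤ _ := by gcongr; positivity
    · intro η h hη hηc hηs hh hhc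
      have cU3 : Continuous fun q : ℝ × ℝ => ε * U q.1 q.2 ^ 3 := by fun_prop
      have cV3 : Continuous fun q : ℝ × ℝ => ε * V q.1 q.2 ^ 3 := by fun_prop
      rw [← integral_pairing hη hηc hh hhc (w := fun t x => U t x - V t x)
        (F := fun t x => ε * U t x ^ 3 - ε * V t x ^ 3) (cU.sub cV) (cU3.sub cV3)]
      have hsub := integral_sub
        (integrable_pairing (w := U) (F := fun t x => ε * U t x ^ 3) hη hηc hh hhc cU cU3)
        (integrable_pairing (w := V) (F := fun t x => ε * V t x ^ 3) hη hηc hh hhc cV cV3)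
      rw [hu.integral_pairing_eq_zero eU hη hηc hηs hh hhc,
        hv.integral_pairing_eq_zero eV hη hηc hηs hh hhc, sub_zero] at hsub
      rw [← hsub]
      congr 1
      ext q
      simp only [pairing]
      ring
    · have hmem := left_mem_Icc.2 ht₁₂.le
      simp only [eU _ hmem, eV _ hmem, hinit, sub_self]
  intro t ht
  ext x
  rw [← eU t ht, ← eV t ht]
  exact sub_eq_zero.1 (hw.eq_zero ht x)

end MKdVPaper
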